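/- Let k be a positive integer. Then R^{inf-div}(k) = E_c(k); that is, a series f ∈ ℂ₀⟨⟨z₁,…,z_k⟩⟩ is the η-series of some distribution in D_c(k) if and only if f is the R-transform of some ⊞-infinitely divisible distribution in D_c(k). -/

import Mathlib

open Finset

attribute [local instance] Classical.propDecidable

open scoped ComplexOrder

namespace BBP

/-- Partitions of `{1,…,m}` modeled as `Finpartition`s of `univ : Finset (Fin m)`. -/
abbrev FP (m : ℕ) := Finpartition (Finset.univ : Finset (Fin m))

noncomputable instance (m : ℕ) : Fintype (FP m) :=
  Fintype.ofInjective (fun π : FP m => π.parts) fun a b h => by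
    cases a; cases b; simpa using h

/-- `x` is the minimum of the set `C`. -/
def IsMinOf {m : ℕ} (x : Fin m) (C : Finset (Fin m)) : Prop :=
  x ∈ C ∧ ∀ y ∈ C, x ≤ y

/-- `x` is the maximum of the set `C`. -/
def IsMaxOf {m : ℕ} (x : Fin m) (C : Finset (Fin m)) : Prop :=
  x ∈ C ∧ ∀ y ∈ C, y ≤ x

/-- `a` and `b` lie in one block of `π`. -/
def SameBlock {m : ℕ} (π : FP m) (a b : Fin m) : Prop :=
  ∃ B ∈ π.parts, a ∈ B ∧ b ∈ B

/-- `π` is non-crossing: if `i<j<k<l`, `i,k` in one block and `j,l` in one block,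
then all of them are in one block. -/
def IsNC {m : ℕ} (π : FP m) : Prop :=
  ∀ i j k l : Fin m, i < j → j < k → k < l →
    SameBlock π i k → SameBlock π j l → SameBlock π i j

/-- `A` embraces `B` : `min A ≤ min B` and `max B ≤ max A`. -/
def Embraces {m : ℕ} (A B : Finset (Fin m)) : Prop :=
  ∃ a₁ a₂ b₁ b₂ : Fin m, IsMinOf a₁ A ∧ IsMaxOf a₂ A ∧ IsMinOf b₁ B ∧ IsMaxOf b₂ B ∧
    a₁ ≤ b₁ ∧ b₂ ≤ a₂

/-- `B` strictly embraces `A` : `min B < min A` and `max A < max B`. -/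
def StrictlyEmbraces {m : ℕ} (B A : Finset (Fin m)) : Prop :=
  ∃ b₁ b₂ a₁ a₂ : Fin m, IsMinOf b₁ B ∧ IsMaxOf b₂ B ∧ IsMinOf a₁ A ∧ IsMaxOf a₂ A ∧
    b₁ < a₁ ∧ a₂ < b₂

/-- `A` is an outer block of `π`. -/
def IsOuter {m : ℕ} (π : FP m) (A : Finset (Fin m)) : Prop :=
  A ∈ π.parts ∧ ¬ ∃ B ∈ π.parts, StrictlyEmbraces B A

/-- The number `|π|_out` of outer blocks of `π`. -/
noncomputable def numOuter {m : ℕ} (π : FP m) : ℕ :=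
  (π.parts.filter fun A => IsOuter π A).card

/-- Reversed refinement order: every block of `ρ` is a union of blocks of `π`. -/
def Refines {m : ℕ} (π ρ : FP m) : Prop :=
  ∀ B ∈ π.parts, ∃ C ∈ ρ.parts, B ⊆ C

/-- The partial order `π ≪ ρ`. -/
def Ll {m : ℕ} (π ρ : FP m) : Prop :=
  Refines π ρ ∧
    ∀ C ∈ ρ.parts, ∃ B ∈ π.parts, ∃ x y : Fin m,
      IsMinOf x C ∧ IsMaxOf y C ∧ x ∈ B ∧ y ∈ B

/-- The partition `1ₙ` of `{1,…,n+1}` with a single block. -/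
noncomputable def fullPart (n : ℕ) : FP (n+1) :=
  Finpartition.indiscrete (by simpa using (Finset.univ_nonempty (α := Fin (n+1))).ne_empty)

/-- `π` is an interval partition. -/
def IsIntervalPartition {m : ℕ} (π : FP m) : Prop :=
  ∀ B ∈ π.parts, ∀ x ∈ B, ∀ z ∈ B, ∀ y : Fin m, x ≤ y → y ≤ z → y ∈ B

/-- `σ` is the permutation associated to `π` : on each block `{b₁ < ⋯ < b_q}` it is the
cycle `b₁ ↦ b₂ ↦ ⋯ ↦ b_q ↦ b₁`. -/
def IsAssocPerm {m : ℕ} (π : FP m) (σ : Equiv.Perm (Fin m)) : Prop :=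
  ∀ B ∈ π.parts, ∀ b ∈ B, σ b ∈ B ∧
    ((b < σ b ∧ ∀ x ∈ B, b < x → σ b ≤ x) ∨ (IsMaxOf b B ∧ IsMinOf (σ b) B))

/-- `κ` is the Kreweras complement of `π`, characterized by `P_κ = P_π⁻¹ ∘ P_{1ₙ}`,
where `P_{1ₙ}` is the cycle `1 ↦ 2 ↦ ⋯ ↦ n ↦ 1` (i.e. `finRotate`). -/
def IsKrewerasPair {m : ℕ} (π κ : FP m) : Prop :=
  ∃ σπ σκ : Equiv.Perm (Fin m), IsAssocPerm π σπ ∧ IsAssocPerm κ σκ ∧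
    σκ = σπ⁻¹ * finRotate m

/-- the element `2a-1` of `{1,…,2n}`, in `Fin (2n)` (0-indexed). -/
def oddEmb {n : ℕ} (a : Fin n) : Fin (2*n) := ⟨2*a.val, by have := a.isLt; omega⟩

/-- the element `2a` of `{1,…,2n}`, in `Fin (2n)` (0-indexed). -/
def evenEmb {n : ℕ} (a : Fin n) : Fin (2*n) := ⟨2*a.val + 1, by have := a.isLt; omega⟩

/-- `θ = π^(odd) ∪ ρ^(even)` : the blocks of `θ` are the sets `{2a-1 : a ∈ A}` for `A`
a block of `π` and the sets `{2b : b ∈ B}` for `B` a block of `ρ`. -/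
def IsOddEvenJoin {n : ℕ} (π ρ : FP n) (θ : FP (2*n)) : Prop :=
  θ.parts = π.parts.image (fun B => B.image oddEmb) ∪
    ρ.parts.image (fun B => B.image evenEmb)

/-- a block consisting of odd elements of `{1,…,2n}` (even 0-indexed values). -/
def OddBlock {m : ℕ} (B : Finset (Fin m)) : Prop := ∀ x ∈ B, x.val % 2 = 0

/-- a block consisting of even elements of `{1,…,2n}` (odd 0-indexed values). -/
def EvenBlock {m : ℕ} (B : Finset (Fin m)) : Prop := ∀ x ∈ B, x.val % 2 = 1

/-- every block of `θ` is contained in the odds or in the evens. -/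
def ParityPreserving {m : ℕ} (θ : FP m) : Prop :=
  ∀ B ∈ θ.parts, OddBlock B ∨ EvenBlock B

def OppositeParity {m : ℕ} (A B : Finset (Fin m)) : Prop :=
  (OddBlock A ∧ EvenBlock B) ∨ (EvenBlock A ∧ OddBlock B)

def SameParity {m : ℕ} (A B : Finset (Fin m)) : Prop :=
  (OddBlock A ∧ OddBlock B) ∨ (EvenBlock A ∧ EvenBlock B)

/-- `P = Parent_θ(A)` : the unique block `P ≠ A` of `θ` embracing `A` such that every
block `A' ≠ A` of `θ` embracing `A` also embraces `P`. -/
def IsParent {m : ℕ} (θ : FP m) (A P : Finset (Fin m)) : Prop :=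
  P ∈ θ.parts ∧ P ≠ A ∧ Embraces P A ∧
    ∀ A' ∈ θ.parts, A' ≠ A → Embraces A' A → Embraces A' P

/-- `θ` has exactly two outer blocks. -/
def ExactlyTwoOuterBlocks {m : ℕ} (θ : FP m) : Prop :=
  ∃ M ∈ θ.parts, ∃ N ∈ θ.parts, M ≠ N ∧ IsOuter θ M ∧ IsOuter θ N ∧
    ∀ A ∈ θ.parts, IsOuter θ A → A = M ∨ A = N

/-- A series in `ℂ₀⟨⟨z₁,…,z_k⟩⟩`, given by its family of coefficients: `f n w` is the
coefficient of `z_{w 0} z_{w 1} ⋯ z_{w n}` (a word of length `n+1 ≥ 1`). -/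
abbrev NCSeries (k : ℕ) := (n : ℕ) → (Fin (n+1) → Fin k) → ℂ

/-- The coefficient `Cf_{w|B}(f)` of the restriction of the word `w` to the set `B`,
listing the elements of `B` in increasing order.  (Equals `1` for `B = ∅`.) -/
noncomputable def partCoeff {k m : ℕ} (f : NCSeries k) (w : Fin (m+1) → Fin k)
    (B : Finset (Fin (m+1))) : ℂ :=
  if h : B.Nonempty then
    f (B.card - 1) (fun j =>
      w ((B.orderIsoOfFin (Nat.succ_pred_eq_of_pos (Finset.card_pos.mpr h)).symm j).1))
  else 1

/-- The generalized coefficient `Cf_{w;π}(f) = ∏_{B block of π} Cf_{w|B}(f)`. -/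
noncomputable def genCoeff {k m : ℕ} (f : NCSeries k) (w : Fin (m+1) → Fin k)
    (π : FP (m+1)) : ℂ :=
  ∏ B ∈ π.parts, partCoeff f w B

/-- Linear functionals on `ℂ⟨X₁,…,X_k⟩`. -/
abbrev Dist (k : ℕ) := FreeAlgebra ℂ (Fin k) →ₗ[ℂ] ℂ

/-- `μ ∈ D_alg(k)` : `μ` is normalized by `μ(1) = 1`. -/
def IsDalg {k : ℕ} (μ : Dist k) : Prop := μ 1 = 1

/-- The moment series `M_μ`, with `(momentSeries μ) n w = μ (X_{w 0} ⋯ X_{w n})`. -/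
noncomputable def momentSeries {k : ℕ} (μ : Dist k) : NCSeries k :=
  fun _ w => μ ((List.ofFn fun j => FreeAlgebra.ι ℂ (w j)).prod)

/-- `f = R_μ` : the moments of `μ` are obtained from `f` by summation over all
non-crossing partitions. -/
def IsRTransform {k : ℕ} (μ : Dist k) (f : NCSeries k) : Prop :=
  ∀ (n : ℕ) (w : Fin (n+1) → Fin k),
    momentSeries μ n w = ∑ π : FP (n+1), if IsNC π then genCoeff f w π else 0

/-- `g = η_μ` : the moments of `μ` are obtained from `g` by summation over all
interval partitions. -/
def IsEtaSeries {k : ℕ} (μ : Dist k) (g : NCSeries k) : Prop :=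
  ∀ (n : ℕ) (w : Fin (n+1) → Fin k),
    momentSeries μ n w = ∑ π : FP (n+1), if IsIntervalPartition π then genCoeff g w π else 0

/-- `μ ∈ D_c(k)` : `μ` is the joint distribution of a `k`-tuple of selfadjoint elements
with respect to a state on a unital C*-algebra. -/
def IsDc {k : ℕ} (μ : Dist k) : Prop :=
  IsDalg μ ∧
  ∃ (A : Type) (_ : NormedRing A) (_ : StarRing A) (_ : CStarRing A)
    (_ : NormedAlgebra ℂ A) (_ : StarModule ℂ A) (_ : CompleteSpace A)
    (φ : A →ₗ[ℂ] ℂ) (x : Fin k → A),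
      φ 1 = 1 ∧ (∀ a : A, 0 ≤ φ (star a * a)) ∧ (∀ i, IsSelfAdjoint (x i)) ∧
      ∀ (n : ℕ) (w : Fin (n+1) → Fin k),
        momentSeries μ n w = φ ((List.ofFn fun j => x (w j)).prod)

/-- convergence in moments. -/
def ConvInMoments {k : ℕ} (μseq : ℕ → Dist k) (μ : Dist k) : Prop :=
  ∀ P : FreeAlgebra ℂ (Fin k),
    Filter.Tendsto (fun N => μseq N P) Filter.atTop (nhds (μ P))

/-- coefficientwise convergence of series. -/
def ConvCoeffwise {k : ℕ} (fseq : ℕ → NCSeries k) (f : NCSeries k) : Prop :=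
  ∀ (n : ℕ) (w : Fin (n+1) → Fin k),
    Filter.Tendsto (fun N => fseq N n w) Filter.atTop (nhds (f n w))

/-- `ν` is the `p`-fold free additive convolution `μ ⊞ ⋯ ⊞ μ`, i.e. `R_ν = p · R_μ`. -/
def IsNFoldFree {k : ℕ} (p : ℕ) (μ ν : Dist k) : Prop :=
  ∃ f : NCSeries k, IsRTransform μ f ∧ IsRTransform ν (fun n w => (p : ℂ) * f n w)

/-- `ν` is the `p`-fold Boolean convolution `μ ⊎ ⋯ ⊎ μ`, i.e. `η_ν = p · η_μ`. -/
def IsNFoldBool {k : ℕ} (p : ℕ) (μ ν : Dist k) : Prop :=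
  ∃ g : NCSeries k, IsEtaSeries μ g ∧ IsEtaSeries ν (fun n w => (p : ℂ) * g n w)

/-- `ν = 𝔹(μ)` : the Boolean Bercovici–Pata bijection, `R_{𝔹(μ)} = η_μ`. -/
def IsBP {k : ℕ} (μ ν : Dist k) : Prop :=
  ∃ f : NCSeries k, IsEtaSeries μ f ∧ IsRTransform ν f

/-- `μ ∈ D_c(k)` is infinitely divisible with respect to `⊞`. -/
def IsInfDiv {k : ℕ} (μ : Dist k) : Prop :=
  IsDc μ ∧ ∀ N : ℕ, 0 < N → ∃ ν : Dist k, IsDc ν ∧ IsNFoldFree N ν μ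

/-- `g = Reta(f)`, i.e. there is `μ ∈ D_alg(k)` with `f = R_μ` and `g = η_μ`. -/
def RetaRel {k : ℕ} (f g : NCSeries k) : Prop :=
  ∃ μ : Dist k, IsDalg μ ∧ IsRTransform μ f ∧ IsEtaSeries μ g

/-!
Both sets of series consist of the series whose coefficient at a word `x y₁ ⋯ y_m z` is
`⟪ξ_x, T_{y₁} ⋯ T_{y_m} ξ_z⟫`, with real coefficients at single letters, for vectors `ξ_i` and
bounded symmetric operators `T_i` on an inner product space.

For `η`-series, compress the selfadjoint operators realising `μ` to the orthogonal complement of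
the vacuum vector; conversely, the block operators `[a_i, ⟪ξ_i, ·⟫; ξ_i, T_i]` on `ℂ ⊕ V` have the
prescribed `η`-series in their vacuum state.

For `R`-transforms, the sum of the creation, annihilation, gauge and scalar operators built from
`ξ_i`, `T_i` and `a_i` on the full Fock space has the prescribed free cumulants, and rescaling `ξ_i`
to `√r ξ_i`, `a_i` to `r a_i`, multiplies them by `r > 0`, whence infinite divisibility. Conversely,
the `R`-transform `f` of an infinitely divisible distribution is the limit of `N` times the moments
of its `N`-th free convolution roots. Hence `(u, v) ↦ f (u.reverse ++ v)` is a positive kernel on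
nonempty words, and a geometric bound on its coefficients makes left multiplication by a letter a
bounded operator on the associated inner product space.
-/

section PartitionSums

variable {α : Type*} {R : Type*} [CommSemiring R]

/-- The sum of `∏ B ∈ P, F B` over the partitions `P` of `A` whose family of blocks satisfies `q`.
Conditions are imposed on families of blocks so that one condition makes sense for partitions of
different sets. -/
noncomputable def partitionSum (F : Finset α → R) (q : Finset (Finset α) → Prop) (A : Finset α) :
    R :=
  ∑ π : Finpartition A with q π.parts, ∏ B ∈ π.parts, F B

variable {F : Finset α → R} {q q₁ q₂ : Finset (Finset α) → Prop} {A A₁ A₂ : Finset α}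

lemma partitionSum_congr (h : ∀ π : Finpartition A, q₁ π.parts ↔ q₂ π.parts) :
    partitionSum F q₁ A = partitionSum F q₂ A :=
  Finset.sum_congr (Finset.filter_congr fun π _ => h π) fun _ _ => rfl

lemma partitionSum_eq_add (h : ∀ π : Finpartition A, q π.parts ↔ q₁ π.parts ∨ q₂ π.parts)
    (hdisj : ∀ π : Finpartition A, q₁ π.parts → ¬ q₂ π.parts) :
    partitionSum F q A = partitionSum F q₁ A + partitionSum F q₂ A := by
  unfold partitionSum
  rw [Finset.filter_congr fun π _ => h π, Finset.filter_or, Finset.sum_union]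
  exact Finset.disjoint_filter.2 fun π _ => hdisj π

lemma partitionSum_eq_sum {ι : Type*} (s : Finset ι) (r : ι → Finset (Finset α) → Prop)
    (h : ∀ π : Finpartition A, q π.parts ↔ ∃ i ∈ s, r i π.parts)
    (hunique : ∀ π : Finpartition A, ∀ i ∈ s, ∀ j ∈ s, r i π.parts → r j π.parts → i = j) :
    partitionSum F q A = ∑ i ∈ s, partitionSum F (r i) A := by
  unfold partitionSum
  rw [← Finset.sum_biUnion]
  · refine Finset.sum_congr ?_ fun _ _ => rfl
    ext π
    simp only [mem_filter, mem_univ, true_and, mem_biUnion, h]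
  · intro i hi j hj hij
    refine Finset.disjoint_filter.2 fun π _ hri hrj => hij (hunique π i hi j hj hri hrj)

/-- The partition of a disjoint union formed by the blocks of two given partitions. -/
noncomputable def disjUnionPartition (hd : Disjoint A₁ A₂) (π₁ : Finpartition A₁)
    (π₂ : Finpartition A₂) : Finpartition (A₁ ∪ A₂) where
  parts := π₁.parts ∪ π₂.parts
  supIndep := by
    rw [Finset.supIndep_iff_pairwiseDisjoint, Finset.coe_union, Set.pairwiseDisjoint_union]
    exact ⟨π₁.disjoint, π₂.disjoint, fun B hB C hC _ => hd.mono (π₁.le hB) (π₂.le hC)⟩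
  sup_parts := by rw [Finset.sup_union, π₁.sup_parts, π₂.sup_parts]; rfl
  bot_notMem h := (mem_union.1 h).elim π₁.bot_notMem π₂.bot_notMem

/-- The partition of `A₁` formed by those blocks of `π` which lie in `A₁`, when every block of `π`
meeting `A₁` does. -/
noncomputable def restrictPartition (π : Finpartition A) (hA : A₁ ⊆ A)
    (h : ∀ B ∈ π.parts, B ⊆ A₁ ∨ Disjoint B A₁) : Finpartition A₁ :=
  π.ofSubset (parts := π.parts.filter (· ⊆ A₁)) (filter_subset _ _) <| by
    refine le_antisymm (Finset.sup_le fun B hB => (mem_filter.1 hB).2) fun x hx => ?_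
    obtain ⟨B, hB, hxB⟩ := π.exists_mem (hA hx)
    have hBA : B ⊆ A₁ := (h B hB).resolve_right fun hd => Finset.disjoint_left.1 hd hxB hx
    exact Finset.mem_sup.2 ⟨B, mem_filter.2 ⟨hB, hBA⟩, hxB⟩

lemma exists_eq_disjUnionPartition (hd : Disjoint A₁ A₂) (π : Finpartition (A₁ ∪ A₂))
    (h : ∀ B ∈ π.parts, B ⊆ A₁ ∨ B ⊆ A₂) : ∃ π₁ π₂, disjUnionPartition hd π₁ π₂ = π := by
  refine ⟨restrictPartition π subset_union_left fun B hB => (h B hB).imp_right hd.symm.mono_left,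
    restrictPartition π subset_union_right fun B hB => (h B hB).symm.imp_right hd.mono_left, ?_⟩
  refine Finpartition.ext (?_ : π.parts.filter (· ⊆ A₁) ∪ π.parts.filter (· ⊆ A₂) = π.parts)
  rw [← Finset.filter_or, Finset.filter_true_of_mem h]

lemma not_subset_of_mem_parts_of_disjoint (hd : Disjoint A₁ A₂) (π : Finpartition A₁)
    {B : Finset α} (hB : B ∈ π.parts) : ¬ B ⊆ A₂ := fun h =>
  π.ne_bot hB (disjoint_self.1 (hd.mono (π.le hB) h))

lemma filter_union_parts (hd : Disjoint A₁ A₂) (π₁ : Finpartition A₁) (π₂ : Finpartition A₂) :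
    (π₁.parts ∪ π₂.parts).filter (· ⊆ A₁) = π₁.parts := by
  rw [Finset.filter_union, Finset.filter_true_of_mem fun B hB => π₁.le hB,
    Finset.filter_false_of_mem fun B hB =>
      not_subset_of_mem_parts_of_disjoint hd.symm π₂ hB, union_empty]

lemma disjUnionPartition_inj (hd : Disjoint A₁ A₂) {π₁ ρ₁ : Finpartition A₁}
    {π₂ ρ₂ : Finpartition A₂} (h : disjUnionPartition hd π₁ π₂ = disjUnionPartition hd ρ₁ ρ₂) :
    π₁ = ρ₁ ∧ π₂ = ρ₂ := by
  have hparts : π₁.parts ∪ π₂.parts = ρ₁.parts ∪ ρ₂.parts := congrArg Finpartition.parts h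
  constructor <;> apply Finpartition.ext
  · rw [← filter_union_parts hd π₁ π₂, hparts, filter_union_parts hd]
  · rw [← filter_union_parts hd.symm π₂ π₁, union_comm, hparts, union_comm,
      filter_union_parts hd.symm]

lemma partitionSum_union (hd : Disjoint A₁ A₂)
    (hsplit : ∀ π : Finpartition (A₁ ∪ A₂), q π.parts → ∀ B ∈ π.parts, B ⊆ A₁ ∨ B ⊆ A₂)
    (hq : ∀ (π₁ : Finpartition A₁) (π₂ : Finpartition A₂),
      q (π₁.parts ∪ π₂.parts) ↔ q₁ π₁.parts ∧ q₂ π₂.parts) :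
    partitionSum F q (A₁ ∪ A₂) = partitionSum F q₁ A₁ * partitionSum F q₂ A₂ := by
  unfold partitionSum
  rw [Finset.sum_mul_sum, ← Finset.sum_product']
  symm
  refine Finset.sum_bij (fun p _ => disjUnionPartition hd p.1 p.2) ?_ ?_ ?_ ?_
  · intro p hp
    simp only [mem_product, mem_filter, mem_univ, true_and] at hp ⊢
    exact (hq _ _).2 hp
  · intro p _ p' _ h
    exact Prod.ext (disjUnionPartition_inj hd h).1 (disjUnionPartition_inj hd h).2
  · intro π hπ
    obtain ⟨π₁, π₂, rfl⟩ := exists_eq_disjUnionPartition hd π (hsplit π (mem_filter.1 hπ).2)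
    refine ⟨(π₁, π₂), ?_, rfl⟩
    simpa only [mem_product, mem_filter, mem_univ, true_and] using
      (hq _ _).1 (mem_filter.1 hπ).2
  · intro p _
    refine (Finset.prod_union (Finset.disjoint_left.2 fun B hB₁ hB₂ => ?_)).symm
    exact not_subset_of_mem_parts_of_disjoint hd p.1 hB₁ (p.2.le hB₂)

lemma partitionSum_empty (h : q ∅) : partitionSum F q ∅ = 1 := by
  have hparts : ∀ π : Finpartition (∅ : Finset α), π.parts = ∅ := fun π =>
    π.parts_eq_empty_iff.2 rfl
  have : Unique (Finpartition (∅ : Finset α)) := inferInstanceAs (Unique (Finpartition ⊥))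
  rw [partitionSum, Finset.filter_true_of_mem fun π _ => by rwa [hparts π],
    Fintype.sum_unique, hparts, prod_empty]

lemma partitionSum_eq_of_iff_singleton (hA : A.Nonempty)
    (h : ∀ π : Finpartition A, q π.parts ↔ π.parts = {A}) : partitionSum F q A = F A := by
  have hfilter : ({π : Finpartition A | q π.parts} : Finset _) =
      {Finpartition.indiscrete hA.ne_empty} := by
    ext π
    simp only [mem_filter, mem_univ, true_and, h, mem_singleton, Finpartition.ext_iff,
      Finpartition.indiscrete_parts]
  rw [partitionSum, hfilter, sum_singleton, Finpartition.indiscrete_parts, prod_singleton]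

lemma parts_eq_singleton (π : Finpartition A) {B : Finset α} (hB : B ∈ π.parts) (hAB : A ⊆ B) :
    π.parts = {A} := by
  obtain rfl : B = A := (π.le hB).antisymm hAB
  refine Finset.eq_singleton_iff_unique_mem.2 ⟨hB, fun C hC => ?_⟩
  obtain ⟨x, hx⟩ := π.nonempty_of_mem_parts hC
  exact π.eq_of_mem_parts hC hB hx (π.le hC hx)

/-- Every block of `P` meeting `U` contains `U`. -/
def Together (U : Finset α) (P : Finset (Finset α)) : Prop :=
  ∀ C ∈ P, ∀ z ∈ U, z ∈ C → U ⊆ C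

variable {U : Finset α}

lemma together_empty (P : Finset (Finset α)) : Together ∅ P :=
  fun _ _ _ hz => absurd hz (notMem_empty _)

lemma Together.mono {P Q : Finset (Finset α)} (h : Q ⊆ P) (hP : Together U P) :
    Together U Q :=
  fun C hC => hP C (h hC)

lemma together_union_iff (hU : Disjoint U A₁) (π₁ : Finpartition A₁)
    (π₂ : Finpartition A₂) : Together U (π₁.parts ∪ π₂.parts) ↔ Together U π₂.parts := by
  refine ⟨Together.mono subset_union_right, fun h C hC z hzU hzC => ?_⟩
  rcases mem_union.1 hC with hC | hC
  · exact absurd (π₁.le hC hzC) (Finset.disjoint_left.1 hU hzU)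
  · exact h C hC z hzU hzC

end PartitionSums

section NoncrossingFamilies

variable {α : Type*} [LinearOrder α]

/-- Two blocks `B ∋ i, k` and `C ∋ j, l` with `i < j < k < l` coincide. -/
def IsNoncrossing (P : Finset (Finset α)) : Prop :=
  ∀ ⦃i j k l : α⦄, i < j → j < k → k < l → ∀ B ∈ P, ∀ C ∈ P,
    i ∈ B → k ∈ B → j ∈ C → l ∈ C → B = C

/-- No block of `P` has an element strictly between two elements of another block. -/
def IsIntervalFamily (P : Finset (Finset α)) : Prop :=
  ∀ B ∈ P, ∀ C ∈ P, ∀ x ∈ B, ∀ z ∈ B, ∀ y ∈ C, x ≤ y → y ≤ z → B = C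

/-- `x` is the least element of a block of `P`. -/
def StartsBlock (x : α) (P : Finset (Finset α)) : Prop :=
  ∃ D ∈ P, x ∈ D ∧ ∀ d ∈ D, x ≤ d

/-- `x` and `y` are the least and the greatest element of a block of `P`. -/
def SpansBlock (x y : α) (P : Finset (Finset α)) : Prop :=
  ∃ D ∈ P, x ∈ D ∧ y ∈ D ∧ ∀ d ∈ D, d ∈ Set.Icc x y

/-- Some block of `P` contains elements on both sides of any element of any block: in a
non-crossing partition this means that there is exactly one outer block. -/
def HasEnclosingBlock (P : Finset (Finset α)) : Prop :=
  ∃ D ∈ P, ∀ C ∈ P, ∀ c ∈ C, (∃ a ∈ D, a ≤ c) ∧ ∃ b ∈ D, c ≤ b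

lemma IsNoncrossing.mono {P Q : Finset (Finset α)} (h : Q ⊆ P) (hP : IsNoncrossing P) :
    IsNoncrossing Q :=
  fun _ _ _ _ hij hjk hkl B hB C hC => hP hij hjk hkl B (h hB) C (h hC)

lemma IsIntervalFamily.mono {P Q : Finset (Finset α)} (h : Q ⊆ P) (hP : IsIntervalFamily P) :
    IsIntervalFamily Q :=
  fun B hB C hC => hP B (h hB) C (h hC)

lemma IsIntervalFamily.isNoncrossing {P : Finset (Finset α)} (hP : IsIntervalFamily P) :
    IsNoncrossing P :=
  fun i j k _ hij hjk _ B hB C hC hi hk hj _ => hP B hB C hC i hi k hk j hj hij.le hjk.le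

lemma isIntervalFamily_singleton (A : Finset α) : IsIntervalFamily {A} := by
  intro B hB C hC _ _ _ _ _ _ _ _
  rw [mem_singleton.1 hB, mem_singleton.1 hC]

variable {A : Finset α} {x y : α}

lemma IsNoncrossing.union {A₁ A₂ : Finset α} (h₁ : ∀ a ∈ A₁, a ∈ Set.Icc x y)
    (h₂ : ∀ a ∈ A₂, a ∉ Set.Icc x y) {π₁ : Finpartition A₁} {π₂ : Finpartition A₂}
    (hπ₁ : IsNoncrossing π₁.parts) (hπ₂ : IsNoncrossing π₂.parts) :
    IsNoncrossing (π₁.parts ∪ π₂.parts) := by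
  have not_between : ∀ a ∈ A₁, ∀ c ∈ A₁, ∀ b ∈ A₂, a < b → b < c → False :=
    fun a ha c hc b hb hab hbc =>
      h₂ b hb ⟨(h₁ a ha).1.trans hab.le, hbc.le.trans (h₁ c hc).2⟩
  intro i j k l hij hjk hkl B hB C hC hi hk hj hl
  rcases mem_union.1 hB with hB | hB <;> rcases mem_union.1 hC with hC | hC
  · exact hπ₁ hij hjk hkl B hB C hC hi hk hj hl
  · exact (not_between i (π₁.le hB hi) k (π₁.le hB hk) j (π₂.le hC hj) hij hjk).elim
  · exact (not_between j (π₁.le hC hj) l (π₁.le hC hl) k (π₂.le hB hk) hjk hkl).elim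
  · exact hπ₂ hij hjk hkl B hB C hC hi hk hj hl

lemma IsIntervalFamily.union {A₁ A₂ : Finset α} (h : ∀ a ∈ A₁, ∀ b ∈ A₂, a < b)
    {π₁ : Finpartition A₁} {π₂ : Finpartition A₂} (hπ₁ : IsIntervalFamily π₁.parts)
    (hπ₂ : IsIntervalFamily π₂.parts) : IsIntervalFamily (π₁.parts ∪ π₂.parts) := by
  intro B hB C hC a ha c hc b hb hab hbc
  rcases mem_union.1 hB with hB | hB <;> rcases mem_union.1 hC with hC | hC
  · exact hπ₁ B hB C hC a ha c hc b hb hab hbc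
  · exact absurd hbc (h c (π₁.le hB hc) b (π₂.le hC hb)).not_ge
  · exact absurd hab (h b (π₁.le hC hb) a (π₂.le hB ha)).not_ge
  · exact hπ₂ B hB C hC a ha c hc b hb hab hbc

lemma startsBlock_iff_exists_spansBlock (π : Finpartition A) :
    StartsBlock x π.parts ↔ ∃ y ∈ A.filter (x ≤ ·), SpansBlock x y π.parts := by
  constructor
  · rintro ⟨D, hD, hxD, hx⟩
    have hmax := D.max'_mem ⟨x, hxD⟩
    exact ⟨D.max' ⟨x, hxD⟩, mem_filter.2 ⟨π.le hD hmax, hx _ hmax⟩, D, hD, hxD, hmax,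
      fun d hd => ⟨hx d hd, D.le_max' d hd⟩⟩
  · rintro ⟨y, -, D, hD, hxD, -, hIcc⟩
    exact ⟨D, hD, hxD, fun d hd => (hIcc d hd).1⟩

lemma SpansBlock.right_unique {π : Finpartition A} {z : α} (hy : SpansBlock x y π.parts)
    (hz : SpansBlock x z π.parts) : y = z := by
  obtain ⟨D, hD, hxD, hyD, hDy⟩ := hy
  obtain ⟨E, hE, hxE, hzE, hEz⟩ := hz
  obtain rfl := π.eq_of_mem_parts hD hE hxD hxE
  exact le_antisymm (hEz y hyD).2 (hDy z hzE).2

/-- Otherwise the block would cross the block spanning from `x` to `y`. -/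
lemma mem_Icc_of_spansBlock {π : Finpartition A} (hπ : IsNoncrossing π.parts)
    (hxy : SpansBlock x y π.parts) {C : Finset α} (hC : C ∈ π.parts) {c d : α} (hcC : c ∈ C)
    (hdC : d ∈ C) (hc : c ∈ Set.Icc x y) : d ∈ Set.Icc x y := by
  obtain ⟨D, hD, hxD, hyD, hDxy⟩ := hxy
  by_cases hCD : C = D
  · exact hDxy d (hCD ▸ hdC)
  have ne_of_mem : ∀ z ∈ D, c ≠ z := by
    rintro z hz rfl
    exact hCD (π.eq_of_mem_parts hC hD hcC hz)
  have hxc : x < c := lt_of_le_of_ne hc.1 (ne_of_mem x hxD).symm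
  have hcy : c < y := lt_of_le_of_ne hc.2 (ne_of_mem y hyD)
  by_contra hd
  rcases not_and_or.1 hd with hdx | hyd
  · exact hCD (hπ (not_le.1 hdx) hxc hcy C hC D hD hdC hcC hxD hyD)
  · exact hCD (hπ hxc hcy (not_le.1 hyd) D hD C hC hxD hyD hcC hdC).symm

lemma spansBlock_union_iff {A₁ A₂ : Finset α} (h₁ : ∀ a ∈ A₁, a ∈ Set.Icc x y) (hx : x ∈ A₁)
    (hy : y ∈ A₁) (hx₂ : x ∉ A₂) (π₁ : Finpartition A₁) (π₂ : Finpartition A₂) :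
    SpansBlock x y (π₁.parts ∪ π₂.parts) ↔ HasEnclosingBlock π₁.parts := by
  constructor
  · rintro ⟨D, hD, hxD, hyD, -⟩
    have hD₁ : D ∈ π₁.parts :=
      (mem_union.1 hD).resolve_right fun hD₂ => hx₂ (π₂.le hD₂ hxD)
    exact ⟨D, hD₁, fun C hC c hc =>
      ⟨⟨x, hxD, (h₁ c (π₁.le hC hc)).1⟩, y, hyD, (h₁ c (π₁.le hC hc)).2⟩⟩
  · rintro ⟨D, hD, hD₁⟩
    obtain ⟨B, hB, hxB⟩ := π₁.exists_mem hx
    obtain ⟨C, hC, hyC⟩ := π₁.exists_mem hy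
    obtain ⟨a, haD, hax⟩ := (hD₁ B hB x hxB).1
    obtain ⟨b, hbD, hyb⟩ := (hD₁ C hC y hyC).2
    obtain rfl := le_antisymm hax (h₁ a (π₁.le hD haD)).1
    obtain rfl := le_antisymm hyb (h₁ b (π₁.le hD hbD)).2
    exact ⟨D, mem_union_left _ hD, haD, hbD, fun d hd => h₁ d (π₁.le hD hd)⟩

lemma HasEnclosingBlock.parts_eq_singleton {π : Finpartition A} (h : HasEnclosingBlock π.parts)
    (hπ : IsIntervalFamily π.parts) : π.parts = {A} := by
  obtain ⟨D, hD, hDA⟩ := h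
  refine BBP.parts_eq_singleton π hD fun z hz => ?_
  obtain ⟨C, hC, hzC⟩ := π.exists_mem hz
  obtain ⟨⟨a, haD, haz⟩, b, hbD, hzb⟩ := hDA C hC z hzC
  exact hπ D hD C hC a haD b hbD z hzC haz hzb ▸ hzC

lemma hasEnclosingBlock_singleton (A : Finset α) : HasEnclosingBlock {A} :=
  ⟨A, mem_singleton_self A, fun _ hC c hc =>
    ⟨⟨c, mem_singleton.1 hC ▸ hc, le_rfl⟩, c, mem_singleton.1 hC ▸ hc, le_rfl⟩⟩

end NoncrossingFamilies

section Decomposition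

variable {α : Type*} [LinearOrder α] {R : Type*} [CommSemiring R]

/-- Cut along the hull `[x, y]` of the block of `x`. -/
lemma partitionSum_startsBlock (F : Finset α → R) {N : Finset (Finset α) → Prop}
    (hN : ∀ P, N P → IsNoncrossing P) (hmono : ∀ P Q, Q ⊆ P → N P → N Q) {A U : Finset α} {x : α}
    (hx : x ∈ A) (hU : ∀ u ∈ U, u < x)
    (hunion : ∀ y ∈ A, ∀ (π₁ : Finpartition (A.filter (· ∈ Set.Icc x y)))
      (π₂ : Finpartition (A.filter (· ∉ Set.Icc x y))), N π₁.parts → N π₂.parts →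
      N (π₁.parts ∪ π₂.parts)) :
    partitionSum F (fun P => (N P ∧ Together U P) ∧ StartsBlock x P) A =
      ∑ y ∈ A.filter (x ≤ ·),
        partitionSum F (fun P => N P ∧ HasEnclosingBlock P) (A.filter (· ∈ Set.Icc x y)) *
          partitionSum F (fun P => N P ∧ Together U P) (A.filter (· ∉ Set.Icc x y)) := by
  rw [partitionSum_eq_sum (A.filter (x ≤ ·))
    (fun y P => (N P ∧ Together U P) ∧ SpansBlock x y P)]
  · refine Finset.sum_congr rfl fun y hy => ?_
    obtain ⟨hyA, hxy⟩ := mem_filter.1 hy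
    conv_lhs => rw [← Finset.filter_union_filter_not_eq (· ∈ Set.Icc x y) A]
    refine partitionSum_union (Finset.disjoint_filter_filter_not _ _ _) ?_ fun π₁ π₂ => ?_
    · rintro π ⟨⟨hNπ, -⟩, hspan⟩ C hC
      have hCA : C ⊆ A := (π.le hC).trans (Finset.filter_union_filter_not_eq _ A).le
      by_cases hmeet : ∃ c ∈ C, c ∈ Set.Icc x y
      · obtain ⟨c, hcC, hc⟩ := hmeet
        exact Or.inl fun d hd => mem_filter.2
          ⟨hCA hd, mem_Icc_of_spansBlock (hN _ hNπ) hspan hC hcC hd hc⟩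
      · exact Or.inr fun d hd => mem_filter.2 ⟨hCA hd, fun h => hmeet ⟨d, hd, h⟩⟩
    · have hNunion : N (π₁.parts ∪ π₂.parts) ↔ N π₁.parts ∧ N π₂.parts :=
        ⟨fun h => ⟨hmono _ _ subset_union_left h, hmono _ _ subset_union_right h⟩,
          fun h => hunion y hyA π₁ π₂ h.1 h.2⟩
      rw [hNunion, spansBlock_union_iff (fun a ha => (mem_filter.1 ha).2)
          (mem_filter.2 ⟨hx, le_rfl, hxy⟩) (mem_filter.2 ⟨hyA, hxy, le_rfl⟩)
          (fun h => absurd (Set.left_mem_Icc.2 hxy) (mem_filter.1 h).2),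
        together_union_iff (Finset.disjoint_left.2 fun u hu h =>
          (hU u hu).not_ge (mem_filter.1 h).2.1)]
      tauto
  · intro π
    simp only [startsBlock_iff_exists_spansBlock, ← exists_and_left, and_left_comm]
  · rintro π y - z - ⟨-, hy⟩ ⟨-, hz⟩
    exact hy.right_unique hz

end Decomposition

section SortedLists

variable {α : Type*} [LinearOrder α]

lemma pairwise_lt_take {u v : List α} {x : α} (h : (u ++ x :: v).Pairwise (· < ·)) (i : ℕ) :
    (x :: v.take i).Pairwise (· < ·) :=
  (List.pairwise_append.1 h).2.1.sublist ((List.take_sublist i v).cons_cons x)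

lemma pairwise_lt_drop {u v : List α} {x : α} (h : (u ++ x :: v).Pairwise (· < ·)) (i : ℕ) :
    (u ++ v.drop i).Pairwise (· < ·) :=
  h.sublist <| (List.Sublist.refl u).append <|
    (List.drop_sublist i v).trans (List.sublist_cons_self x v)

lemma le_getElem_of_mem_take {l : List α} (h : l.Pairwise (· < ·)) {i : ℕ} (hi : i < l.length)
    {z : α} (hz : z ∈ l.take (i + 1)) : z ≤ l[i] := by
  rw [← List.take_append_getElem hi] at hz
  rw [← List.take_append_drop (i + 1) l, ← List.take_append_getElem hi, List.append_assoc] at h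
  have hlt := (List.pairwise_append.1 h).2.2
  rcases List.mem_append.1 hz with hz | hz
  · exact (hlt z hz _ (List.mem_append_left _ (List.mem_singleton_self _))).le
  · exact (List.mem_singleton.1 hz).le

lemma getElem_lt_of_mem_drop {l : List α} (h : l.Pairwise (· < ·)) {i : ℕ} (hi : i < l.length)
    {z : α} (hz : z ∈ l.drop (i + 1)) : l[i] < z := by
  rw [← List.take_append_drop (i + 1) l] at h
  exact (List.pairwise_append.1 h).2.2 _ (List.mem_take_iff_getElem.2 ⟨i, by omega, rfl⟩) z hz

variable {u v : List α} {x : α}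

lemma filter_mem_Icc_toFinset (h : (u ++ x :: v).Pairwise (· < ·)) {i : ℕ}
    (hi : i < (x :: v).length) :
    (u ++ x :: v).toFinset.filter (· ∈ Set.Icc x (x :: v)[i]) = (x :: v.take i).toFinset ∧
    (u ++ x :: v).toFinset.filter (· ∉ Set.Icc x (x :: v)[i]) = (u ++ v.drop i).toFinset := by
  obtain ⟨-, hxv, hux⟩ := List.pairwise_append.1 h
  have hu : ∀ z ∈ u, z ∉ Set.Icc x (x :: v)[i] := fun z hz hz' =>
    (hux z hz x List.mem_cons_self).not_ge hz'.1
  have htake : ∀ z ∈ x :: v.take i, z ∈ Set.Icc x (x :: v)[i] := fun z hz =>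
    ⟨by
      rcases List.mem_cons.1 hz with rfl | hz
      · exact le_rfl
      · exact (List.rel_of_pairwise_cons hxv (List.mem_of_mem_take hz)).le,
    le_getElem_of_mem_take hxv hi hz⟩
  have hdrop : ∀ z ∈ v.drop i, z ∉ Set.Icc x (x :: v)[i] := fun z hz hz' =>
    (getElem_lt_of_mem_drop hxv hi hz).not_ge hz'.2
  have hmem : ∀ z, z ∈ u ++ x :: v ↔ z ∈ u ∨ z ∈ x :: v.take i ∨ z ∈ v.drop i := fun z => by
    conv_lhs => rw [← List.take_append_drop i v]
    simp only [List.mem_append, List.mem_cons, or_assoc]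
  constructor <;> ext z <;>
    simp only [mem_filter, List.mem_toFinset, hmem, List.mem_append (s := u)] <;>
    grind

lemma sum_Icc_toFinset {M : Type*} [AddCommMonoid M] (φ : Finset α → Finset α → M)
    (h : (u ++ x :: v).Pairwise (· < ·)) :
    ∑ y ∈ (u ++ x :: v).toFinset.filter (x ≤ ·),
      φ ((u ++ x :: v).toFinset.filter (· ∈ Set.Icc x y))
        ((u ++ x :: v).toFinset.filter (· ∉ Set.Icc x y)) =
    ∑ i ∈ range (v.length + 1), φ (x :: v.take i).toFinset (u ++ v.drop i).toFinset := by
  obtain ⟨-, hxv, hux⟩ := List.pairwise_append.1 h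
  symm
  refine Finset.sum_bij (fun i hi => (x :: v)[i]'(mem_range.1 hi)) ?_ ?_ ?_ ?_
  · intro i hi
    refine mem_filter.2 ⟨List.mem_toFinset.2 (List.mem_append_right _ (List.getElem_mem _)), ?_⟩
    exact le_getElem_of_mem_take hxv (mem_range.1 hi) List.mem_cons_self
  · intro i hi j hj hij
    exact (List.Nodup.getElem_inj_iff (hxv.imp ne_of_lt)).1 hij
  · intro y hy
    obtain ⟨hy, hxy⟩ := mem_filter.1 hy
    rcases List.mem_append.1 (List.mem_toFinset.1 hy) with hyu | hyv
    · exact absurd hxy (hux y hyu x List.mem_cons_self).not_ge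
    · obtain ⟨i, hi, hiy⟩ := List.mem_iff_getElem.1 hyv
      exact ⟨i, mem_range.2 hi, hiy⟩
  · intro i hi
    obtain ⟨htake, hdrop⟩ := filter_mem_Icc_toFinset h (mem_range.1 hi)
    rw [htake, hdrop]

end SortedLists

section PartitionRecursions

variable {α : Type*} [LinearOrder α] {R : Type*} [CommSemiring R] (F : Finset α → R)

/-- The sum over the non-crossing partitions of `A` which have all of `U` in one block. -/
noncomputable def noncrossingSum (U A : Finset α) : R :=
  partitionSum F (fun P => IsNoncrossing P ∧ Together U P) A

/-- The sum over the non-crossing partitions with a single outer block. -/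
noncomputable def irreducibleSum (A : Finset α) : R :=
  partitionSum F (fun P => IsNoncrossing P ∧ HasEnclosingBlock P) A

/-- The sum over interval partitions. -/
noncomputable def intervalSum (A : Finset α) : R := partitionSum F IsIntervalFamily A

lemma noncrossingSum_empty : noncrossingSum F ∅ ∅ = 1 :=
  partitionSum_empty ⟨fun _ _ _ _ _ _ _ _ hB => absurd hB (notMem_empty _), together_empty _⟩

lemma noncrossingSum_empty_left (A : Finset α) :
    noncrossingSum F ∅ A = partitionSum F IsNoncrossing A :=
  partitionSum_congr fun π => and_iff_left (together_empty π.parts)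

lemma intervalSum_empty : intervalSum F ∅ = 1 :=
  partitionSum_empty fun _ hB => absurd hB (notMem_empty _)

lemma noncrossingSum_self {U : Finset α} (hU : U.Nonempty) : noncrossingSum F U U = F U := by
  refine partitionSum_eq_of_iff_singleton hU fun π => ⟨fun ⟨_, hUπ⟩ => ?_, fun hπ => ?_⟩
  · obtain ⟨x, hx⟩ := hU
    obtain ⟨B, hB, hxB⟩ := π.exists_mem hx
    exact parts_eq_singleton π hB (hUπ B hB x hx hxB)
  · rw [hπ]
    exact ⟨(isIntervalFamily_singleton U).isNoncrossing,
      fun C hC _ _ _ => (mem_singleton.1 hC).ge⟩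

lemma noncrossingSum_singleton (x : α) (A : Finset α) :
    noncrossingSum F {x} A = noncrossingSum F ∅ A := by
  rw [noncrossingSum_empty_left]
  refine partitionSum_congr fun π => and_iff_left ?_
  intro C _ z hz hzC
  rw [mem_singleton.1 hz] at hzC
  exact singleton_subset_iff.2 hzC

lemma partitionSum_noncrossing_startsBlock {u v : List α} {x : α}
    (h : (u ++ x :: v).Pairwise (· < ·)) :
    partitionSum F (fun P => (IsNoncrossing P ∧ Together u.toFinset P) ∧ StartsBlock x P)
        (u ++ x :: v).toFinset =
      ∑ i ∈ range (v.length + 1), irreducibleSum F (x :: v.take i).toFinset *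
        noncrossingSum F u.toFinset (u ++ v.drop i).toFinset := by
  rw [← sum_Icc_toFinset (fun A B => irreducibleSum F A * noncrossingSum F u.toFinset B) h]
  refine partitionSum_startsBlock F (fun _ => id) (fun _ _ => IsNoncrossing.mono)
    (List.mem_toFinset.2 (List.mem_append_right _ List.mem_cons_self))
    (fun z hz => (List.pairwise_append.1 h).2.2 z (List.mem_toFinset.1 hz) x List.mem_cons_self)
    fun y _ π₁ π₂ => ?_
  exact IsNoncrossing.union (fun a ha => (mem_filter.1 ha).2) fun a ha => (mem_filter.1 ha).2

lemma startsBlock_of_forall_le {A : Finset α} (π : Finpartition A) {x : α} (hx : x ∈ A)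
    (hle : ∀ a ∈ A, x ≤ a) : StartsBlock x π.parts := by
  obtain ⟨D, hD, hxD⟩ := π.exists_mem hx
  exact ⟨D, hD, hxD, fun d hd => hle d (π.le hD hd)⟩

lemma le_of_mem_toFinset_cons {v : List α} {x : α} (h : (x :: v).Pairwise (· < ·)) :
    ∀ z ∈ (x :: v).toFinset, x ≤ z := by
  intro z hz
  rcases List.mem_cons.1 (List.mem_toFinset.1 hz) with rfl | hz
  · exact le_rfl
  · exact (List.rel_of_pairwise_cons h hz).le

lemma noncrossingSum_empty_cons {v : List α} {x : α} (h : (x :: v).Pairwise (· < ·)) :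
    noncrossingSum F ∅ (x :: v).toFinset = ∑ i ∈ range (v.length + 1),
      irreducibleSum F (x :: v.take i).toFinset * noncrossingSum F ∅ (v.drop i).toFinset := by
  refine Eq.trans ?_ (partitionSum_noncrossing_startsBlock F (u := []) h)
  refine partitionSum_congr fun π => (and_iff_left ?_).symm
  exact startsBlock_of_forall_le π (List.mem_toFinset.2 List.mem_cons_self)
    (le_of_mem_toFinset_cons h)

lemma together_iff_together_insert_or_startsBlock {U A : Finset α} {x : α} (π : Finpartition A)
    (hU : ∀ a ∈ A, a ∈ U ↔ a < x) (hx : x ∈ A) :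
    Together U π.parts ↔ Together (insert x U) π.parts ∨
      Together U π.parts ∧ StartsBlock x π.parts := by
  obtain ⟨D, hD, hxD⟩ := π.exists_mem hx
  constructor
  · intro hUπ
    by_cases hmeet : ∃ z ∈ D, z ∈ U
    · obtain ⟨z₀, hz₀D, hz₀U⟩ := hmeet
      have hUD : insert x U ⊆ D := insert_subset hxD (hUπ D hD z₀ hz₀U hz₀D)
      exact Or.inl fun C hC z hz hzC => π.eq_of_mem_parts hC hD hzC (hUD hz) ▸ hUD
    · push Not at hmeet
      exact Or.inr ⟨hUπ, D, hD, hxD, fun d hd =>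
        not_lt.1 fun hdx => hmeet d hd ((hU d (π.le hD hd)).2 hdx)⟩
  · rintro (h | h)
    · exact fun C hC z hz hzC =>
        (subset_insert x U).trans (h C hC z (mem_insert_of_mem hz) hzC)
    · exact h.1

lemma noncrossingSum_cons {u v : List α} {x : α} (hu : u ≠ [])
    (h : (u ++ x :: v).Pairwise (· < ·)) :
    noncrossingSum F u.toFinset (u ++ x :: v).toFinset =
      noncrossingSum F (u ++ [x]).toFinset (u ++ x :: v).toFinset +
      ∑ i ∈ range (v.length + 1), irreducibleSum F (x :: v.take i).toFinset *
        noncrossingSum F u.toFinset (u ++ v.drop i).toFinset := by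
  have hux : (u ++ [x]).toFinset = insert x u.toFinset := by
    ext z; simp only [List.mem_toFinset, List.mem_append, List.mem_singleton, mem_insert, or_comm]
  have hxA : x ∈ (u ++ x :: v).toFinset :=
    List.mem_toFinset.2 (List.mem_append_right _ List.mem_cons_self)
  obtain ⟨-, hxv, hlt⟩ := List.pairwise_append.1 h
  have hU : ∀ a ∈ (u ++ x :: v).toFinset, a ∈ u.toFinset ↔ a < x := by
    intro a ha
    rw [List.mem_toFinset] at ha ⊢
    refine ⟨fun hau => hlt a hau x List.mem_cons_self, fun hax => ?_⟩
    exact (List.mem_append.1 ha).resolve_right fun hav =>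
      hax.not_ge (le_of_mem_toFinset_cons hxv a (List.mem_toFinset.2 hav))
  rw [← partitionSum_noncrossing_startsBlock F h, hux]
  refine partitionSum_eq_add (fun π => ?_) fun π hins hstart => ?_
  · rw [together_iff_together_insert_or_startsBlock π hU hxA]
    tauto
  · obtain ⟨z, hz⟩ := List.exists_mem_of_ne_nil u hu
    obtain ⟨D, hD, hxD, hle⟩ := hstart.2
    have hzD := hins.2 D hD x (mem_insert_self _ _) hxD
      (mem_insert_of_mem (List.mem_toFinset.2 hz))
    exact (hlt z hz x List.mem_cons_self).not_ge (hle z hzD)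

lemma partitionSum_interval_enclosing {A : Finset α} (hA : A.Nonempty) :
    partitionSum F (fun P => IsIntervalFamily P ∧ HasEnclosingBlock P) A = F A := by
  refine partitionSum_eq_of_iff_singleton hA fun π =>
    ⟨fun ⟨hint, hencl⟩ => hencl.parts_eq_singleton hint, fun hπ => ?_⟩
  rw [hπ]
  exact ⟨isIntervalFamily_singleton A, hasEnclosingBlock_singleton A⟩

lemma intervalSum_cons {v : List α} {x : α} (h : (x :: v).Pairwise (· < ·)) :
    intervalSum F (x :: v).toFinset = ∑ i ∈ range (v.length + 1),
      F (x :: v.take i).toFinset * intervalSum F (v.drop i).toFinset := by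
  have hle := le_of_mem_toFinset_cons h
  have hx : x ∈ (x :: v).toFinset := List.mem_toFinset.2 List.mem_cons_self
  refine Eq.trans ?_ (sum_Icc_toFinset (u := []) (fun A B => F A * intervalSum F B) h)
  have hcut := partitionSum_startsBlock F (N := IsIntervalFamily) (U := ∅)
    (fun _ => IsIntervalFamily.isNoncrossing) (fun _ _ => IsIntervalFamily.mono) hx
    (fun _ hu => absurd hu (notMem_empty _)) fun y _ π₁ π₂ => IsIntervalFamily.union
      fun a ha b hb => (mem_filter.1 ha).2.2.trans_lt <| not_le.1 fun hby =>
        (mem_filter.1 hb).2 ⟨hle b (mem_filter.1 hb).1, hby⟩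
  have hforget : ∀ A : Finset α,
      partitionSum F (fun P => IsIntervalFamily P ∧ Together ∅ P) A = intervalSum F A :=
    fun A => partitionSum_congr fun π => and_iff_left (together_empty _)
  simp only [hforget] at hcut
  refine Eq.trans (partitionSum_congr fun π => ?_)
    (hcut.trans (Finset.sum_congr rfl fun y hy => ?_))
  · exact ⟨fun hint => ⟨⟨hint, together_empty _⟩, startsBlock_of_forall_le π hx hle⟩,
      fun h => h.1.1⟩
  · rw [partitionSum_interval_enclosing F ⟨x, mem_filter.2 ⟨hx, le_rfl, (mem_filter.1 hy).2⟩⟩]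
    rfl

end PartitionRecursions

section Words

variable {L R : Type*} [CommRing R] (f : List L → R)

/-- The vacuum coefficient of a walk on stacks of words. Reading a letter `x` either pushes the new
word `[x]` on the stack or appends `x` to the top word `u`; the new top word may then be removed,
with weight `f`. Words on the stack are the open blocks of a non-crossing partition. -/
def fockWalk : List (List L) → List L → R
  | [], [] => 1
  | _ :: _, [] => 0
  | [], x :: v => fockWalk [[x]] v + f [x] * fockWalk [] v
  | u :: s, x :: v => (fockWalk ([x] :: u :: s) v + f [x] * fockWalk (u :: s) v) +
      (fockWalk ((u ++ [x]) :: s) v + f (u ++ [x]) * fockWalk s v)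
termination_by _ v => v

/-- The part of `fockWalk` whose walks empty the stack at the last letter and not before. -/
def firstPassage : List (List L) → List L → R
  | [], [] => 1
  | _ :: _, [] => 0
  | [], _ :: _ => 0
  | u :: s, x :: v => (firstPassage ([x] :: u :: s) v + f [x] * firstPassage (u :: s) v) +
      (firstPassage ((u ++ [x]) :: s) v + f (u ++ [x]) * firstPassage s v)
termination_by _ v => v

/-- The walk from the open block `u`, which may be closed at once, up to the first time the stack
is empty: the block containing `u` then encloses everything. -/
def irreducibleWalk (u v : List L) : R := firstPassage f [u] v + f u * firstPassage f [] v

/-- The walk from the open block `u`, which may be closed at once. -/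
def pinnedWalk (u v : List L) : R := fockWalk f [u] v + f u * fockWalk f [] v

/-- The moments of the distribution with free cumulants `f`. -/
def freeMoment (v : List L) : R := fockWalk f [] v

/-- The moments of the distribution with Boolean cumulants `f`. -/
def boolMoment : List L → R
  | [] => 1
  | x :: v => ∑ i : Fin (v.length + 1), f (x :: v.take i) * boolMoment (v.drop i)
termination_by v => v.length
decreasing_by simp

lemma fockWalk_append (v : List L) : ∀ s t : List (List L), fockWalk f (s ++ t) v =
    ∑ i ∈ range (v.length + 1), firstPassage f s (v.take i) * fockWalk f t (v.drop i) := by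
  induction v with
  | nil => intro s t; cases s <;> simp [firstPassage, fockWalk]
  | cons x v ih =>
    intro s t
    rw [List.length_cons, Finset.sum_range_succ']
    cases s with
    | nil => simp [firstPassage]
    | cons u s =>
      have hpush := ih ([x] :: u :: s) t
      have hskip := ih (u :: s) t
      have happend := ih ((u ++ [x]) :: s) t
      simp only [List.cons_append] at hpush hskip happend
      simp only [List.cons_append, List.take_succ_cons, List.drop_succ_cons, List.take_zero]
      rw [fockWalk, hpush, hskip, happend, ih s t, firstPassage, zero_mul, add_zero,
        Finset.mul_sum, Finset.mul_sum, ← Finset.sum_add_distrib, ← Finset.sum_add_distrib,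
        ← Finset.sum_add_distrib]
      refine Finset.sum_congr rfl fun i _ => ?_
      rw [firstPassage]
      ring

lemma fockWalk_cons_add (u : List L) (t : List (List L)) (v : List L) :
    fockWalk f (u :: t) v + f u * fockWalk f t v =
      ∑ i ∈ range (v.length + 1), irreducibleWalk f u (v.take i) * fockWalk f t (v.drop i) := by
  have hu := fockWalk_append f v [u] t
  have ht := fockWalk_append f v [] t
  simp only [List.cons_append, List.nil_append] at hu ht
  conv_lhs => rw [hu, ht]
  rw [Finset.mul_sum, ← Finset.sum_add_distrib]
  refine Finset.sum_congr rfl fun i _ => ?_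
  rw [irreducibleWalk]
  ring

lemma freeMoment_nil : freeMoment f [] = 1 := by rw [freeMoment, fockWalk]

lemma freeMoment_cons (x : L) (v : List L) : freeMoment f (x :: v) = pinnedWalk f [x] v := by
  rw [freeMoment, fockWalk, pinnedWalk]

lemma freeMoment_cons_eq_sum (x : L) (v : List L) : freeMoment f (x :: v) =
    ∑ i ∈ range (v.length + 1), irreducibleWalk f [x] (v.take i) * freeMoment f (v.drop i) := by
  rw [freeMoment_cons, pinnedWalk, fockWalk_cons_add]
  rfl

lemma irreducibleWalk_eq_sub (x : L) (v : List L) : irreducibleWalk f [x] v =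
    freeMoment f (x :: v) -
      ∑ i ∈ range v.length, irreducibleWalk f [x] (v.take i) * freeMoment f (v.drop i) := by
  rw [freeMoment_cons_eq_sum, Finset.sum_range_succ, List.take_length, List.drop_length,
    freeMoment_nil, mul_one, add_sub_cancel_left]

lemma pinnedWalk_nil (u : List L) : pinnedWalk f u [] = f u := by
  rw [pinnedWalk, fockWalk, fockWalk, zero_add, mul_one]

lemma pinnedWalk_cons (u : List L) (x : L) (v : List L) : pinnedWalk f u (x :: v) =
    pinnedWalk f (u ++ [x]) v +
      ∑ i ∈ range (v.length + 1), irreducibleWalk f [x] (v.take i) * pinnedWalk f u (v.drop i) := by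
  have hsum : ∑ i ∈ range (v.length + 1),
      irreducibleWalk f [x] (v.take i) * pinnedWalk f u (v.drop i) =
        (fockWalk f [[x], u] v + f [x] * fockWalk f [u] v) +
          f u * (fockWalk f [[x]] v + f [x] * fockWalk f [] v) := by
    rw [fockWalk_cons_add, fockWalk_cons_add, Finset.mul_sum, ← Finset.sum_add_distrib]
    refine Finset.sum_congr rfl fun i _ => ?_
    rw [pinnedWalk]
    ring
  rw [hsum, pinnedWalk, pinnedWalk, fockWalk, fockWalk]
  ring

lemma boolMoment_nil : boolMoment f [] = 1 := by rw [boolMoment]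

lemma boolMoment_cons (x : L) (v : List L) : boolMoment f (x :: v) =
    ∑ i ∈ range (v.length + 1), f (x :: v.take i) * boolMoment f (v.drop i) := by
  rw [boolMoment, Finset.sum_range]

end Words

section WalksCountPartitions

variable {L R α : Type*} [LinearOrder α] {F : Finset α → R} {f : List L → R} {c : α → L}

lemma apply_toFinset_eq (hF : ∀ B : Finset α, B.Nonempty → F B = f (B.sort.map c))
    {u : List α} (hu : u ≠ []) (h : u.Pairwise (· < ·)) : F u.toFinset = f (u.map c) := by
  rw [hF _ (u.toFinset_nonempty_iff.2 hu),
    (List.toFinset_sort (· ≤ ·) h.nodup).2 (h.imp le_of_lt)]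

variable [CommRing R]

lemma irreducibleSum_eq_irreducibleWalk {n : ℕ}
    (hmom : ∀ v : List α, v.length ≤ n → v.Pairwise (· < ·) →
      noncrossingSum F ∅ v.toFinset = freeMoment f (v.map c))
    (x : α) (a : List α) (ha : a.length < n) (hxa : (x :: a).Pairwise (· < ·)) :
    irreducibleSum F (x :: a).toFinset = irreducibleWalk f [c x] (a.map c) := by
  induction hm : a.length using Nat.strong_induction_on generalizing a with | _ m ih =>
  have hrec := noncrossingSum_empty_cons F hxa
  rw [Finset.sum_range_succ, List.take_length, List.drop_length, List.toFinset_nil,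
    noncrossingSum_empty, mul_one, hmom (x :: a) ha hxa] at hrec
  rw [irreducibleWalk_eq_sub, eq_sub_iff_add_eq, add_comm, ← List.map_cons, hrec, List.length_map]
  refine congrArg (· + _) (Finset.sum_congr rfl fun i hi => ?_)
  rw [Finset.mem_range] at hi
  have hlen : (a.take i).length = i := List.length_take_of_le hi.le
  rw [ih i (hm ▸ hi) (a.take i) (by omega) (pairwise_lt_take (u := []) hxa i) hlen,
    hmom (a.drop i) (by rw [List.length_drop]; omega) (pairwise_lt_drop (u := []) hxa i),
    List.map_take, List.map_drop]

lemma noncrossingSum_empty_eq_freeMoment_of_pinned {n : ℕ}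
    (hpin : ∀ u v : List α, u ≠ [] → u.length + v.length ≤ n → (u ++ v).Pairwise (· < ·) →
      noncrossingSum F u.toFinset (u ++ v).toFinset = pinnedWalk f (u.map c) (v.map c))
    (v : List α) (hn : v.length ≤ n) (hv : v.Pairwise (· < ·)) :
    noncrossingSum F ∅ v.toFinset = freeMoment f (v.map c) := by
  cases v with
  | nil => rw [List.map_nil, freeMoment_nil, List.toFinset_nil, noncrossingSum_empty]
  | cons x v =>
    rw [List.map_cons, freeMoment_cons, ← noncrossingSum_singleton F x]
    refine hpin [x] v (List.cons_ne_nil x []) ?_ hv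
    rwa [List.length_singleton, add_comm]

variable (hF : ∀ B : Finset α, B.Nonempty → F B = f (B.sort.map c))

include hF

lemma noncrossingSum_eq_pinnedWalk (n : ℕ) (u v : List α) (hu : u ≠ [])
    (hn : u.length + v.length ≤ n) (h : (u ++ v).Pairwise (· < ·)) :
    noncrossingSum F u.toFinset (u ++ v).toFinset = pinnedWalk f (u.map c) (v.map c) := by
  induction n generalizing u v with
  | zero => exact absurd (List.length_eq_zero_iff.1 (by omega)) hu
  | succ n ih =>
    have hirr := irreducibleSum_eq_irreducibleWalk (noncrossingSum_empty_eq_freeMoment_of_pinned ih)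
    induction v generalizing u with
    | nil =>
      rw [List.append_nil] at h ⊢
      rw [List.map_nil, pinnedWalk_nil, ← apply_toFinset_eq hF hu h,
        noncrossingSum_self F (u.toFinset_nonempty_iff.2 hu)]
    | cons x v ihv =>
      have hu_pos : 0 < u.length := List.length_pos_iff.2 hu
      rw [List.length_cons] at hn
      rw [noncrossingSum_cons F hu h, List.map_cons, pinnedWalk_cons, List.length_map]
      have happend := ihv (u ++ [x]) (List.append_ne_nil_of_right_ne_nil u (List.cons_ne_nil x []))
        (by rw [List.length_append, List.length_singleton]; omega) (by simpa using h)
      rw [List.append_assoc, List.map_append] at happend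
      refine congrArg₂ (· + ·) happend (Finset.sum_congr rfl fun i hi => ?_)
      rw [Finset.mem_range] at hi
      rw [hirr x (v.take i) (by rw [List.length_take]; omega) (pairwise_lt_take h i),
        ih u (v.drop i) hu (by rw [List.length_drop]; omega) (pairwise_lt_drop h i),
        List.map_take, List.map_drop]

lemma noncrossingSum_empty_eq_freeMoment (v : List α) (hv : v.Pairwise (· < ·)) :
    noncrossingSum F ∅ v.toFinset = freeMoment f (v.map c) :=
  noncrossingSum_empty_eq_freeMoment_of_pinned (noncrossingSum_eq_pinnedWalk hF _) v le_rfl hv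

lemma intervalSum_eq_boolMoment (v : List α) (hv : v.Pairwise (· < ·)) :
    intervalSum F v.toFinset = boolMoment f (v.map c) := by
  induction hn : v.length using Nat.strong_induction_on generalizing v with | _ n ih =>
  cases v with
  | nil => rw [List.map_nil, boolMoment_nil, List.toFinset_nil, intervalSum_empty]
  | cons x v =>
    rw [List.length_cons] at hn
    rw [intervalSum_cons F hv, List.map_cons, boolMoment_cons, List.length_map]
    refine Finset.sum_congr rfl fun i _ => ?_
    rw [apply_toFinset_eq hF (List.cons_ne_nil _ _) (pairwise_lt_take (u := []) hv i),
      ih _ (by rw [List.length_drop]; omega) (v.drop i) (pairwise_lt_drop (u := []) hv i) rfl,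
      List.map_cons, List.map_take, List.map_drop]

end WalksCountPartitions

section MomentCumulant

lemma toFinset_eq_univ {α : Type*} [Fintype α] {l : List α} (h : ∀ a, a ∈ l) : l.toFinset = univ :=
  eq_univ_of_forall fun a => List.mem_toFinset.2 (h a)

variable {k : ℕ}

/-- The coefficient of a series at a word; the constant coefficient is set to `1`. -/
def wordCoeff (f : NCSeries k) : List (Fin k) → ℂ
  | [] => 1
  | x :: l => f l.length fun i => (x :: l).get i

lemma wordCoeff_ofFn (f : NCSeries k) (n : ℕ) (w : Fin (n + 1) → Fin k) :
    wordCoeff f (List.ofFn w) = f n w := by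
  have hget : ∀ (l : List (Fin k)) (hl : l.length = n + 1),
      wordCoeff f l = f n fun i => l.get (i.cast hl.symm) := by
    rintro (_ | ⟨x, l⟩) hl
    · simp at hl
    · obtain rfl : l.length = n := by simpa using hl
      rfl
  rw [hget _ (List.length_ofFn)]
  exact congrArg (f n) (funext fun i => List.get_ofFn w _)

lemma partCoeff_eq_wordCoeff_sort (f : NCSeries k) {n : ℕ} (w : Fin (n + 1) → Fin k)
    (B : Finset (Fin (n + 1))) (hB : B.Nonempty) :
    partCoeff f w B = wordCoeff f (B.sort.map w) := by
  rw [partCoeff, dif_pos hB, ← wordCoeff_ofFn f, List.ofFn_eq_map,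
    ← Finset.listMap_orderEmbOfFin_finRange B
      (Nat.succ_pred_eq_of_pos (Finset.card_pos.mpr hB)).symm, List.map_map]
  rfl

/-- The moment of `μ` at a word. -/
noncomputable def wordMoment (μ : Dist k) (l : List (Fin k)) : ℂ :=
  μ (l.map (FreeAlgebra.ι ℂ)).prod

lemma momentSeries_eq_wordMoment (μ : Dist k) (n : ℕ) (w : Fin (n + 1) → Fin k) :
    momentSeries μ n w = wordMoment μ (List.ofFn w) := by
  rw [momentSeries, wordMoment, List.map_ofFn]
  rfl

lemma sum_genCoeff_eq_partitionSum (f : NCSeries k) {n : ℕ} (w : Fin (n + 1) → Fin k)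
    (p : FP (n + 1) → Prop) (q : Finset (Finset (Fin (n + 1))) → Prop)
    (hpq : ∀ π, p π ↔ q π.parts) :
    (∑ π : FP (n + 1), if p π then genCoeff f w π else 0) =
      partitionSum (partCoeff f w) q univ := by
  rw [← Finset.sum_filter, partitionSum]
  unfold genCoeff
  simp only [hpq]
  convert rfl
  rfl

lemma isNC_iff_isNoncrossing {m : ℕ} (π : FP m) : IsNC π ↔ IsNoncrossing π.parts := by
  constructor
  · intro h i j k l hij hjk hkl B hB C hC hi hk hj hl
    obtain ⟨D, hD, hiD, hjD⟩ := h i j k l hij hjk hkl ⟨B, hB, hi, hk⟩ ⟨C, hC, hj, hl⟩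
    exact (π.eq_of_mem_parts hB hD hi hiD).trans (π.eq_of_mem_parts hD hC hjD hj)
  · rintro h i j k l hij hjk hkl ⟨B, hB, hi, hk⟩ ⟨C, hC, hj, hl⟩
    obtain rfl := h hij hjk hkl B hB C hC hi hk hj hl
    exact ⟨B, hB, hi, hj⟩

lemma isIntervalPartition_iff_isIntervalFamily {m : ℕ} (π : FP m) :
    IsIntervalPartition π ↔ IsIntervalFamily π.parts := by
  constructor
  · intro h B hB C hC x hx z hz y hy hxy hyz
    exact π.eq_of_mem_parts hB hC (h B hB x hx z hz y hxy hyz) hy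
  · intro h B hB x hx z hz y hxy hyz
    obtain ⟨C, hC, hy⟩ := π.exists_mem (mem_univ y)
    exact h B hB C hC x hx z hz y hy hxy hyz ▸ hy

lemma forall_ofFn_iff {P : List (Fin k) → Prop} :
    (∀ (n : ℕ) (w : Fin (n + 1) → Fin k), P (List.ofFn w)) ↔ ∀ l ≠ [], P l := by
  refine ⟨fun h l hl => ?_, fun h n w => h _ (by simp [List.ofFn_succ])⟩
  obtain ⟨x, l, rfl⟩ := List.exists_cons_of_ne_nil hl
  exact List.ofFn_get (x :: l) ▸ h l.length fun i => (x :: l).get i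

theorem isRTransform_iff (μ : Dist k) (f : NCSeries k) :
    IsRTransform μ f ↔ ∀ l ≠ [], wordMoment μ l = freeMoment (wordCoeff f) l := by
  rw [← forall_ofFn_iff]
  refine forall₂_congr fun n w => ?_
  rw [momentSeries_eq_wordMoment, sum_genCoeff_eq_partitionSum f w _ _ isNC_iff_isNoncrossing,
    List.ofFn_eq_map,
    ← noncrossingSum_empty_eq_freeMoment (F := partCoeff f w)
      (fun B hB => by convert partCoeff_eq_wordCoeff_sort f w B hB) _ (List.pairwise_lt_finRange _),
    toFinset_eq_univ List.mem_finRange, noncrossingSum_empty_left]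

theorem isEtaSeries_iff (μ : Dist k) (f : NCSeries k) :
    IsEtaSeries μ f ↔ ∀ l ≠ [], wordMoment μ l = boolMoment (wordCoeff f) l := by
  rw [← forall_ofFn_iff]
  refine forall₂_congr fun n w => ?_
  rw [momentSeries_eq_wordMoment,
    sum_genCoeff_eq_partitionSum f w _ _ isIntervalPartition_iff_isIntervalFamily,
    List.ofFn_eq_map,
    ← intervalSum_eq_boolMoment (F := partCoeff f w)
      (fun B hB => by convert partCoeff_eq_wordCoeff_sort f w B hB) _ (List.pairwise_lt_finRange _),
    toFinset_eq_univ List.mem_finRange, intervalSum]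

end MomentCumulant

section CumulantInversion

variable {L R : Type*} [CommRing R] {f g : List L → R}

lemma fockWalk_congr (hfg : ∀ l ≠ [], f l = g l) (v : List L) :
    ∀ s, fockWalk f s v = fockWalk g s v := by
  induction v with
  | nil => intro s; cases s <;> simp only [fockWalk]
  | cons x v ih =>
    intro s
    cases s with
    | nil => simp only [fockWalk, ih, hfg [x] (by simp)]
    | cons u s => simp only [fockWalk, ih, hfg [x] (by simp), hfg (u ++ [x]) (by simp)]

lemma freeMoment_congr (hfg : ∀ l ≠ [], f l = g l) : freeMoment f = freeMoment g :=
  funext fun v => fockWalk_congr hfg v []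

lemma boolMoment_ext {m : List L → R} (hnil : m [] = 1) (hcons : ∀ x v, m (x :: v) =
    ∑ i ∈ range (v.length + 1), f (x :: v.take i) * m (v.drop i)) : boolMoment f = m := by
  have key : ∀ n, ∀ v : List L, v.length = n → boolMoment f v = m v := by
    intro n
    induction n using Nat.strong_induction_on with
    | _ n ih =>
      rintro (_ | ⟨x, v⟩) hv
      · rw [boolMoment_nil, hnil]
      · rw [boolMoment_cons, hcons]
        refine Finset.sum_congr rfl fun i _ => ?_
        rw [ih _ _ (v.drop i) rfl]
        simp only [List.length_cons, List.length_drop] at hv ⊢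
        omega
  exact funext fun v => key _ v rfl

lemma boolMoment_congr (hfg : ∀ l ≠ [], f l = g l) : boolMoment f = boolMoment g :=
  boolMoment_ext (boolMoment_nil g) fun x v => by
    rw [boolMoment_cons]
    exact Finset.sum_congr rfl fun i _ => by rw [hfg _ (List.cons_ne_nil _ _)]

theorem eq_of_boolMoment_eq (h : boolMoment f = boolMoment g) : ∀ l ≠ [], f l = g l := by
  have key : ∀ n x, ∀ v : List L, v.length = n → f (x :: v) = g (x :: v) := by
    intro n
    induction n using Nat.strong_induction_on with
    | _ n ih =>
      intro x v hv
      have hx := congrFun h (x :: v)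
      rw [boolMoment_cons, boolMoment_cons, Finset.sum_range_succ, Finset.sum_range_succ, h,
        List.take_length, List.drop_length, boolMoment_nil, mul_one, mul_one] at hx
      refine add_left_cancel (hx.trans (congrArg (· + g (x :: v)) ?_))
      refine Finset.sum_congr rfl fun i hi => ?_
      have hi := Finset.mem_range.mp hi
      rw [ih i (hv ▸ hi) x (v.take i) (by rw [List.length_take, min_eq_left hi.le])]
  rintro (_ | ⟨x, v⟩) hl
  · exact absurd rfl hl
  · exact key _ x v rfl

/-- The Boolean cumulants of the distribution with free cumulants `f`. -/
def freeToBoolean (f : List L → R) : List L → R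
  | [] => 0
  | x :: v => irreducibleWalk f [x] v

theorem boolMoment_freeToBoolean (f : List L → R) : boolMoment (freeToBoolean f) = freeMoment f :=
  boolMoment_ext (freeMoment_nil f) (freeMoment_cons_eq_sum f)

lemma pinnedWalk_append_singleton (f : List L → R) (u : List L) (x : L) (v : List L) :
    pinnedWalk f (u ++ [x]) v = pinnedWalk f u (x :: v) -
      ∑ i ∈ range (v.length + 1),
        freeToBoolean f (x :: v.take i) * pinnedWalk f u (v.drop i) := by
  rw [pinnedWalk_cons]
  exact (add_sub_cancel_right _ _).symm

theorem eq_of_freeMoment_eq (h : freeMoment f = freeMoment g) : ∀ l ≠ [], f l = g l := by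
  have hbool : ∀ l ≠ [], freeToBoolean f l = freeToBoolean g l := eq_of_boolMoment_eq <| by
    rw [boolMoment_freeToBoolean, boolMoment_freeToBoolean, h]
  have hpinned : ∀ u ≠ [], ∀ v, pinnedWalk f u v = pinnedWalk g u v := by
    intro u hu
    induction u using List.reverseRecOn with
    | nil => exact absurd rfl hu
    | append_singleton u x ih =>
      intro v
      rcases eq_or_ne u [] with rfl | hu'
      · rw [List.nil_append, ← freeMoment_cons, ← freeMoment_cons, h]
      · simp only [pinnedWalk_append_singleton, ih hu', hbool _ (List.cons_ne_nil _ _)]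
  intro l hl
  rw [← pinnedWalk_nil f, ← pinnedWalk_nil g, hpinned l hl]

end CumulantInversion

section OperatorModels

open scoped InnerProductSpace

/-- The function `m` on words is realised by the vector state of a unit vector on bounded symmetric
operators. Only a positive semidefinite form is required, so that no quotient or completion is
needed to construct a model. -/
def HasOperatorModel {L : Type*} (m : List L → ℂ) : Prop :=
  ∃ (V : Type) (_ : SeminormedAddCommGroup V) (_ : InnerProductSpace ℂ V) (X : L → V →L[ℂ] V)
    (Ω : V), (∀ x, (X x : V →ₗ[ℂ] V).IsSymmetric) ∧ ‖Ω‖ = 1 ∧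
      ∀ l, m l = ⟪Ω, (l.map X).prod Ω⟫_ℂ

section Hilbert

variable {k : ℕ} {H : Type} [NormedAddCommGroup H] [InnerProductSpace ℂ H]

/-- The joint distribution of a tuple of operators in the vector state of `Ω`. -/
noncomputable def operatorDistribution (X : Fin k → H →L[ℂ] H) (Ω : H) : Dist k :=
  (innerSL ℂ Ω ∘L ContinuousLinearMap.apply ℂ H Ω).toLinearMap ∘ₗ
    (FreeAlgebra.lift ℂ X).toLinearMap

lemma wordMoment_operatorDistribution (X : Fin k → H →L[ℂ] H) (Ω : H) (l : List (Fin k)) :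
    wordMoment (operatorDistribution X Ω) l = ⟪Ω, (l.map X).prod Ω⟫_ℂ := by
  have hlift : FreeAlgebra.lift ℂ X (l.map (FreeAlgebra.ι ℂ)).prod = (l.map X).prod := by
    rw [map_list_prod, List.map_map]
    exact congrArg (fun Y => (l.map Y).prod) (FreeAlgebra.ι_comp_lift X)
  change ⟪Ω, FreeAlgebra.lift ℂ X (l.map (FreeAlgebra.ι ℂ)).prod Ω⟫_ℂ = _
  rw [hlift]

lemma isDc_operatorDistribution [CompleteSpace H] {X : Fin k → H →L[ℂ] H}
    (hX : ∀ i, IsSelfAdjoint (X i)) {Ω : H} (hΩ : ‖Ω‖ = 1) : IsDc (operatorDistribution X Ω) := by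
  have hone : ⟪Ω, Ω⟫_ℂ = 1 := inner_self_eq_one_of_norm_eq_one hΩ
  refine ⟨(wordMoment_operatorDistribution X Ω []).trans hone, H →L[ℂ] H, inferInstance,
    inferInstance, inferInstance, inferInstance, inferInstance, inferInstance,
    (innerSL ℂ Ω ∘L ContinuousLinearMap.apply ℂ H Ω).toLinearMap, X, hone, fun a => ?_, hX,
    fun n w => ?_⟩
  · change 0 ≤ ⟪Ω, (star a * a) Ω⟫_ℂ
    rw [mul_apply_eq_comp, ContinuousLinearMap.star_eq_adjoint,
      ContinuousLinearMap.adjoint_inner_right, inner_self_eq_norm_sq_to_K]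
    norm_cast
    positivity
  · rw [momentSeries_eq_wordMoment, wordMoment_operatorDistribution, List.map_ofFn]
    rfl

end Hilbert

lemma completion_prod_apply_coe {L V : Type*} [SeminormedAddCommGroup V] [InnerProductSpace ℂ V]
    (X : L → V →L[ℂ] V) (l : List L) (v : V) :
    (l.map fun x => (X x).completion).prod (v : UniformSpace.Completion V) =
      ((l.map X).prod v : V) := by
  induction l with
  | nil => rfl
  | cons x l ih =>
    rw [List.map_cons, List.prod_cons, mul_apply_eq_comp, ih,
      ContinuousLinearMap.completion_apply_coe]
    rfl

lemma isSelfAdjoint_completion {V : Type*} [SeminormedAddCommGroup V] [InnerProductSpace ℂ V]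
    {X : V →L[ℂ] V} (hX : (X : V →ₗ[ℂ] V).IsSymmetric) : IsSelfAdjoint X.completion := by
  rw [ContinuousLinearMap.isSelfAdjoint_iff_isSymmetric]
  intro v w
  induction v, w using UniformSpace.Completion.induction_on₂ with
  | hp => apply isClosed_eq <;> simp only [ContinuousLinearMap.coe_coe] <;> fun_prop
  | ih v w =>
    simp only [ContinuousLinearMap.coe_coe, ContinuousLinearMap.completion_apply_coe,
      UniformSpace.Completion.inner_coe]
    exact hX v w

variable {k : ℕ}

theorem HasOperatorModel.exists_isDc {m : List (Fin k) → ℂ} (hm : HasOperatorModel m) :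
    ∃ μ : Dist k, IsDc μ ∧ wordMoment μ = m := by
  obtain ⟨V, _, _, X, Ω, hX, hΩ, hm⟩ := hm
  refine ⟨operatorDistribution (fun x => (X x).completion) (Ω : UniformSpace.Completion V),
    isDc_operatorDistribution (fun x => isSelfAdjoint_completion (hX x))
      ((UniformSpace.Completion.norm_coe Ω).trans hΩ), funext fun l => ?_⟩
  rw [wordMoment_operatorDistribution, completion_prod_apply_coe,
    UniformSpace.Completion.inner_coe, hm]

lemma wordMoment_nil {μ : Dist k} (hμ : IsDalg μ) : wordMoment μ [] = 1 := hμ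

theorem IsDc.hasOperatorModel {μ : Dist k} (hμ : IsDc μ) : HasOperatorModel (wordMoment μ) := by
  obtain ⟨hone, A, _, _, _, _, _, _, φ, x, hφ, hpos, hx, hmom⟩ := hμ
  let _ : CStarAlgebra A := { }
  let _ : PartialOrder A := CStarAlgebra.spectralOrder A
  have _ : StarOrderedRing A := CStarAlgebra.spectralOrderedRing A
  let Φ : A →ₚ[ℂ] ℂ := PositiveLinearMap.mk₀ φ fun a ha => by
    obtain ⟨b, rfl⟩ := CStarAlgebra.nonneg_iff_eq_star_mul_self.mp ha
    exact hpos b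
  let Ω : Φ.GNS := (Φ.toPreGNS 1 : UniformSpace.Completion Φ.PreGNS)
  have hΩ (a : A) : ⟪Ω, Φ.gnsStarAlgHom a Ω⟫_ℂ = φ a := by
    change ⟪Ω, Φ.gnsNonUnitalStarAlgHom a Ω⟫_ℂ = φ a
    rw [PositiveLinearMap.gnsNonUnitalStarAlgHom_apply_coe, UniformSpace.Completion.inner_coe,
      PositiveLinearMap.preGNS_inner_def]
    simp only [PositiveLinearMap.ofPreGNS_toPreGNS, star_one,
      PositiveLinearMap.leftMulMapPreGNS_apply, mul_one, one_mul]
    rfl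
  have hword : ∀ l, wordMoment μ l = φ (l.map x).prod := by
    intro l
    rcases eq_or_ne l [] with rfl | hl
    · exact (wordMoment_nil hone).trans hφ.symm
    · revert l
      rw [← forall_ofFn_iff]
      intro n w
      rw [← momentSeries_eq_wordMoment, hmom, List.map_ofFn]
      rfl
  refine ⟨Φ.GNS, inferInstance, inferInstance, fun i => Φ.gnsStarAlgHom (x i), Ω, fun i => ?_, ?_,
    fun l => ?_⟩
  · exact ContinuousLinearMap.isSelfAdjoint_iff_isSymmetric.mp ((hx i).map Φ.gnsStarAlgHom)
  · have := hΩ 1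
    rw [map_one, hφ, one_apply_eq_self, inner_self_eq_norm_sq_to_K] at this
    exact (pow_eq_one_iff_of_nonneg (norm_nonneg Ω) two_ne_zero).mp (Complex.ofReal_injective
      (by rw [Complex.ofReal_pow, Complex.ofReal_one]; exact this))
  · rw [hword, ← hΩ, map_list_prod, List.map_map]
    rfl

end OperatorModels

section SchurmannSeries

open scoped InnerProductSpace

section Triple

variable {L V : Type*} [SeminormedAddCommGroup V] [InnerProductSpace ℂ V] {a : L → ℝ}
  {T : L → V →L[ℂ] V} {ξ : L → V}

/-- The vector `T y₁ ⋯ T yₘ (ξ z)` of the word `y₁ ⋯ yₘ z`, and `0` for the empty word. -/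
def blockVector (T : L → V →L[ℂ] V) (ξ : L → V) : List L → V
  | [] => 0
  | [x] => ξ x
  | x :: y :: l => T x (blockVector T ξ (y :: l))

/-- The series with coefficients `a x` at `x` and `⟪ξ x, T y₁ ⋯ T yₘ (ξ z)⟫` at `x y₁ ⋯ yₘ z`,
called after the Schürmann triples that generate Lévy processes. -/
noncomputable def schurmannSeries (a : L → ℝ) (T : L → V →L[ℂ] V) (ξ : L → V) : List L → ℂ
  | [] => 0
  | [x] => a x
  | x :: y :: l => ⟪ξ x, blockVector T ξ (y :: l)⟫_ℂ

lemma blockVector_cons (x : L) {v : List L} (hv : v ≠ []) :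
    blockVector T ξ (x :: v) = T x (blockVector T ξ v) := by
  obtain ⟨y, v, rfl⟩ := List.exists_cons_of_ne_nil hv
  rw [blockVector]

lemma schurmannSeries_cons (x : L) {v : List L} (hv : v ≠ []) :
    schurmannSeries a T ξ (x :: v) = ⟪ξ x, blockVector T ξ v⟫_ℂ := by
  obtain ⟨y, v, rfl⟩ := List.exists_cons_of_ne_nil hv
  rw [schurmannSeries]

lemma inner_blockVector_reverse (hT : ∀ x, (T x : V →ₗ[ℂ] V).IsSymmetric) {u : List L}
    (hu : u ≠ []) : ∀ {v : List L}, v ≠ [] →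
      ⟪blockVector T ξ u.reverse, blockVector T ξ v⟫_ℂ = schurmannSeries a T ξ (u ++ v) := by
  induction u using List.reverseRecOn with
  | nil => exact absurd rfl hu
  | append_singleton u x ih =>
    intro v hv
    rw [List.reverse_append, List.reverse_singleton, List.singleton_append]
    rcases eq_or_ne u [] with rfl | hu'
    · exact (schurmannSeries_cons x hv).symm
    · rw [blockVector_cons x (List.reverse_ne_nil_iff.mpr hu'), List.append_assoc,
        List.singleton_append, ← ih hu' (List.cons_ne_nil x v), blockVector_cons x hv]
      exact hT x _ _

lemma blockVector_smul (c : ℂ) (l : List L) :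
    blockVector T (c • ξ) l = c • blockVector T ξ l := by
  induction l with
  | nil => simp only [blockVector, smul_zero]
  | cons x l ih =>
    rcases eq_or_ne l [] with rfl | hl
    · rfl
    · rw [blockVector_cons x hl, blockVector_cons x hl, ih, map_smul]

lemma schurmannSeries_sqrt_smul {r : ℝ} (hr : 0 ≤ r) {l : List L} (hl : l ≠ []) :
    schurmannSeries (r • a) T ((√r : ℂ) • ξ) l = r * schurmannSeries a T ξ l := by
  rcases l with _ | ⟨x, l⟩
  · exact absurd rfl hl
  rcases eq_or_ne l [] with rfl | hl
  · simp only [schurmannSeries, Pi.smul_apply, smul_eq_mul, Complex.ofReal_mul]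
  · rw [schurmannSeries_cons x hl, schurmannSeries_cons x hl, blockVector_smul, Pi.smul_apply,
      inner_smul_left, inner_smul_right, Complex.conj_ofReal, ← mul_assoc, ← Complex.ofReal_mul,
      Real.mul_self_sqrt hr]

lemma norm_blockVector_le {B : ℝ} (hT : ∀ x, ‖T x‖ ≤ B) (hξ : ∀ x, ‖ξ x‖ ≤ B) (hB : 0 ≤ B)
    (l : List L) : ‖blockVector T ξ l‖ ≤ B ^ l.length := by
  induction l with
  | nil => simp [blockVector]
  | cons x l ih =>
    rw [List.length_cons, pow_succ']
    rcases eq_or_ne l [] with rfl | hl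
    · simpa [blockVector] using hξ x
    · rw [blockVector_cons x hl]
      exact ((T x).le_opNorm _).trans (mul_le_mul (hT x) ih (norm_nonneg _) hB)

lemma norm_schurmannSeries_le {B : ℝ} (ha : ∀ x, |a x| ≤ B) (hT : ∀ x, ‖T x‖ ≤ B)
    (hξ : ∀ x, ‖ξ x‖ ≤ B) (hB : 0 ≤ B) (l : List L) :
    ‖schurmannSeries a T ξ l‖ ≤ B ^ l.length := by
  rcases l with _ | ⟨x, l⟩
  · simp [schurmannSeries]
  rcases eq_or_ne l [] with rfl | hl
  · simpa [schurmannSeries] using ha x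
  · rw [schurmannSeries_cons x hl, List.length_cons, pow_succ']
    exact (norm_inner_le_norm _ _).trans
      (mul_le_mul (hξ x) (norm_blockVector_le hT hξ hB l) (norm_nonneg _) hB)

end Triple

variable {L : Type*} {f g : List L → ℂ}

/-- The function `f` is, away from the empty word, the series of a Schürmann triple of bounded
symmetric operators. These turn out to be both the Boolean cumulants of bounded tuples and the
free cumulants of infinitely divisible ones. -/
def IsSchurmannSeries (f : List L → ℂ) : Prop :=
  ∃ (V : Type) (_ : SeminormedAddCommGroup V) (_ : InnerProductSpace ℂ V) (a : L → ℝ)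
    (T : L → V →L[ℂ] V) (ξ : L → V), (∀ x, (T x : V →ₗ[ℂ] V).IsSymmetric) ∧
      ∀ l ≠ [], f l = schurmannSeries a T ξ l

lemma IsSchurmannSeries.congr (hf : IsSchurmannSeries f) (hfg : ∀ l ≠ [], f l = g l) :
    IsSchurmannSeries g := by
  obtain ⟨V, _, _, a, T, ξ, hT, hf⟩ := hf
  exact ⟨V, _, _, a, T, ξ, hT, fun l hl => (hfg l hl).symm.trans (hf l hl)⟩

lemma IsSchurmannSeries.ofReal_smul (hf : IsSchurmannSeries f) {r : ℝ} (hr : 0 ≤ r) :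
    IsSchurmannSeries ((r : ℂ) • f) := by
  obtain ⟨V, _, _, a, T, ξ, hT, hf⟩ := hf
  exact ⟨V, _, _, r • a, T, (√r : ℂ) • ξ, hT, fun l hl => by
    rw [schurmannSeries_sqrt_smul hr hl, ← hf l hl, Pi.smul_apply, smul_eq_mul]⟩

lemma IsSchurmannSeries.exists_norm_le_pow [Finite L] (hf : IsSchurmannSeries f) :
    ∃ B : ℝ, ∀ l ≠ [], ‖f l‖ ≤ B ^ l.length := by
  obtain ⟨V, _, _, a, T, ξ, _, hf⟩ := hf
  obtain ⟨A, hA⟩ := Finite.bddAbove_range fun x => max |a x| (max ‖T x‖ ‖ξ x‖)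
  have hA (x : L) : max |a x| (max ‖T x‖ ‖ξ x‖) ≤ max A 0 :=
    (hA (Set.mem_range_self x)).trans (le_max_left A 0)
  simp only [max_le_iff (a := |_|), max_le_iff (a := ‖_‖)] at hA
  exact ⟨max A 0, fun l hl => hf l hl ▸ norm_schurmannSeries_le (fun x => (hA x).1)
    (fun x => (hA x).2.1) (fun x => (hA x).2.2) (le_max_right A 0) l⟩

end SchurmannSeries

section BooleanModels

open scoped InnerProductSpace

lemma list_prod_apply_eq_sum_boolMoment {L R M : Type*} [CommRing R] [AddCommGroup M] [Module R M]
    {f : List L → R} {X : L → Module.End R M} {W : List L → M}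
    (hW : ∀ x v, X x (W v) = f (x :: v) • W [] + W (x :: v)) (l : List L) :
    (l.map X).prod (W []) =
      ∑ i ∈ range (l.length + 1), boolMoment f (l.drop i) • W (l.take i) := by
  induction l with
  | nil => simp [boolMoment_nil]
  | cons x v ih =>
    rw [List.map_cons, List.prod_cons, Module.End.mul_apply, ih, List.length_cons,
      Finset.sum_range_succ' (fun i => boolMoment f ((x :: v).drop i) • W ((x :: v).take i)),
      List.drop_zero, List.take_zero, boolMoment_cons, map_sum, Finset.sum_smul,
      ← Finset.sum_add_distrib]
    refine Finset.sum_congr rfl fun i _ => ?_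
    rw [map_smul, hW, smul_add, smul_smul, mul_comm, List.drop_succ_cons, List.take_succ_cons,
      add_comm]

lemma inner_self_eq_one {V : Type*} [SeminormedAddCommGroup V] [InnerProductSpace ℂ V] {v : V}
    (hv : ‖v‖ = 1) : ⟪v, v⟫_ℂ = 1 := by
  rw [inner_self_eq_norm_sq_to_K, hv, RCLike.ofReal_one, one_pow]

section Dilation

variable {L V E : Type*} [SeminormedAddCommGroup V] [InnerProductSpace ℂ V]
  [SeminormedAddCommGroup E] [InnerProductSpace ℂ E] {X : L → E →L[ℂ] E} {Ω : E}

lemma list_prod_apply_eq_list_prod_toLinearMap (l : List L) (v : E) :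
    (l.map X).prod v = (l.map fun x => (X x : Module.End ℂ E)).prod v := by
  induction l with
  | nil => rfl
  | cons x l ih =>
    rw [List.map_cons, List.prod_cons, List.map_cons, List.prod_cons, mul_apply_eq_comp,
      Module.End.mul_apply, ih]
    rfl

lemma inner_list_prod_eq_boolMoment {f : List L → ℂ} {W : List L → E}
    (hW : ∀ x v, X x (W v) = f (x :: v) • W [] + W (x :: v)) (hone : ‖W []‖ = 1)
    (horth : ∀ x v, ⟪W [], W (x :: v)⟫_ℂ = 0) (l : List L) :
    ⟪W [], (l.map X).prod (W [])⟫_ℂ = boolMoment f l := by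
  rw [list_prod_apply_eq_list_prod_toLinearMap, list_prod_apply_eq_sum_boolMoment hW,
    Finset.sum_range_succ', inner_add_right, inner_smul_right, List.take_zero,
    inner_self_eq_one hone, mul_one, List.drop_zero, inner_sum, Finset.sum_eq_zero, zero_add]
  intro i hi
  obtain ⟨x, v, rfl⟩ : ∃ x v, l = x :: v :=
    List.exists_cons_of_length_pos (by have := Finset.mem_range.mp hi; omega)
  rw [inner_smul_right, List.take_succ_cons, horth, mul_zero]

lemma inner_list_prod_eq_boolMoment_schurmannSeries {a : L → ℝ} {T : L → V →L[ℂ] V} {ξ : L → V}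
    (J : V →ₗ[ℂ] E) (hΩ : ‖Ω‖ = 1) (hJ : ∀ v, ⟪Ω, J v⟫_ℂ = 0)
    (hXΩ : ∀ x, X x Ω = (a x : ℂ) • Ω + J (ξ x))
    (hXJ : ∀ x v, X x (J v) = ⟪ξ x, v⟫_ℂ • Ω + J (T x v)) (l : List L) :
    ⟪Ω, (l.map X).prod Ω⟫_ℂ = boolMoment (schurmannSeries a T ξ) l := by
  let W (v : List L) : E := (if v = [] then Ω else 0) + J (blockVector T ξ v)
  have hWnil : W [] = Ω := by simp [W, blockVector]
  have hWne {v : List L} (hv : v ≠ []) : W v = J (blockVector T ξ v) := by simp [W, hv]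
  have hW (x : L) (v : List L) :
      X x (W v) = schurmannSeries a T ξ (x :: v) • W [] + W (x :: v) := by
    rw [hWnil, hWne (List.cons_ne_nil x v)]
    rcases eq_or_ne v [] with rfl | hv
    · rw [hWnil, hXΩ]
      rfl
    · rw [hWne hv, hXJ, schurmannSeries_cons x hv, blockVector_cons x hv]
  have horth (x : L) (v : List L) : ⟪W [], W (x :: v)⟫_ℂ = 0 := by
    rw [hWnil, hWne (List.cons_ne_nil x v), hJ]
  rw [← inner_list_prod_eq_boolMoment hW (hWnil.symm ▸ hΩ) horth, hWnil]

end Dilation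

section Compression

variable {V : Type*} [SeminormedAddCommGroup V] [InnerProductSpace ℂ V]

/-- The projection `v ↦ v - ⟪Ω, v⟫ Ω`, for a unit vector `Ω` the one onto its complement. -/
noncomputable def orthogonalPart (Ω : V) : V →L[ℂ] V :=
  .id ℂ V - (innerSL ℂ Ω).smulRight Ω

variable {Ω : V}

lemma orthogonalPart_apply (v : V) : orthogonalPart Ω v = v - ⟪Ω, v⟫_ℂ • Ω := rfl

lemma inner_smul_add_orthogonalPart (v : V) : ⟪Ω, v⟫_ℂ • Ω + orthogonalPart Ω v = v := by
  rw [orthogonalPart_apply, add_sub_cancel]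

lemma isSymmetric_orthogonalPart : (orthogonalPart Ω : V →ₗ[ℂ] V).IsSymmetric := by
  intro v w
  simp only [ContinuousLinearMap.coe_coe, orthogonalPart_apply, inner_sub_left, inner_sub_right,
    inner_smul_left, inner_smul_right, inner_conj_symm]
  ring

lemma inner_orthogonalPart (hΩ : ‖Ω‖ = 1) (v : V) : ⟪Ω, orthogonalPart Ω v⟫_ℂ = 0 := by
  rw [orthogonalPart_apply, inner_sub_right, inner_smul_right, inner_self_eq_one hΩ, mul_one,
    sub_self]

lemma orthogonalPart_orthogonalPart (hΩ : ‖Ω‖ = 1) (v : V) :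
    orthogonalPart Ω (orthogonalPart Ω v) = orthogonalPart Ω v := by
  rw [orthogonalPart_apply, inner_orthogonalPart hΩ, zero_smul, sub_zero]

end Compression

variable {L : Type*} {f : List L → ℂ}

theorem IsSchurmannSeries.of_hasOperatorModel_boolMoment (hf : HasOperatorModel (boolMoment f)) :
    IsSchurmannSeries f := by
  obtain ⟨V, _, _, X, Ω, hX, hΩ, hf⟩ := hf
  let P := orthogonalPart Ω
  let a (x : L) : ℝ := (⟪Ω, X x Ω⟫_ℂ).re
  let T (x : L) : V →L[ℂ] V := P ∘L X x ∘L P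
  let ξ (x : L) : V := P (X x Ω)
  have hT (x : L) : (T x : V →ₗ[ℂ] V).IsSymmetric := fun v w =>
    (isSymmetric_orthogonalPart _ _).trans
      ((hX x _ _).trans (isSymmetric_orthogonalPart v (X x (P w))))
  have hXΩ (x : L) : X x Ω = (a x : ℂ) • Ω + P (ξ x) := by
    have ha : (a x : ℂ) = ⟪Ω, X x Ω⟫_ℂ :=
      Complex.conj_eq_iff_re.mp ((inner_conj_symm _ _).trans (hX x Ω Ω))
    rw [ha, orthogonalPart_orthogonalPart hΩ, inner_smul_add_orthogonalPart]
  have hXP (x : L) (v : V) : X x (P v) = ⟪ξ x, v⟫_ℂ • Ω + P (T x v) := by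
    have hξ : ⟪ξ x, v⟫_ℂ = ⟪Ω, X x (P v)⟫_ℂ :=
      (isSymmetric_orthogonalPart _ v).trans (hX x Ω (P v))
    rw [hξ]
    change _ = _ + P (P (X x (P v)))
    rw [orthogonalPart_orthogonalPart hΩ, inner_smul_add_orthogonalPart]
  have hbool : boolMoment f = boolMoment (schurmannSeries a T ξ) := funext fun l => by
    rw [hf, inner_list_prod_eq_boolMoment_schurmannSeries (P : V →ₗ[ℂ] V) hΩ
      (inner_orthogonalPart hΩ) hXΩ hXP]
  exact ⟨V, _, _, a, T, ξ, hT, eq_of_boolMoment_eq hbool⟩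

section VacuumExtension

variable {V : Type*} [NormedAddCommGroup V] [InnerProductSpace ℂ V]

/-- The operator with matrix `[a, ⟪ξ, ·⟫; ξ, T]` on `ℂ ⊕ V`. -/
noncomputable def vacuumExtension (a : ℝ) (T : V →L[ℂ] V) (ξ : V) :
    WithLp 2 (ℂ × V) →L[ℂ] WithLp 2 (ℂ × V) :=
  (WithLp.prodContinuousLinearEquiv 2 ℂ ℂ V).symm ∘L
    (((a : ℂ) • .fst ℂ ℂ V + innerSL ℂ ξ ∘L .snd ℂ ℂ V).prod
      ((ContinuousLinearMap.fst ℂ ℂ V).smulRight ξ + T ∘L .snd ℂ ℂ V)) ∘L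
    (WithLp.prodContinuousLinearEquiv 2 ℂ ℂ V)

lemma vacuumExtension_apply (a : ℝ) (T : V →L[ℂ] V) (ξ : V) (c : ℂ) (v : V) :
    vacuumExtension a T ξ (WithLp.toLp 2 (c, v)) =
      WithLp.toLp 2 (a * c + ⟪ξ, v⟫_ℂ, c • ξ + T v) := rfl

lemma isSymmetric_vacuumExtension (a : ℝ) {T : V →L[ℂ] V} (hT : (T : V →ₗ[ℂ] V).IsSymmetric)
    (ξ : V) : (vacuumExtension a T ξ : _ →ₗ[ℂ] WithLp 2 (ℂ × V)).IsSymmetric := by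
  rintro ⟨c, v⟩ ⟨d, w⟩
  have hvw : ⟪T v, w⟫_ℂ = ⟪v, T w⟫_ℂ := hT v w
  simp only [ContinuousLinearMap.coe_coe, vacuumExtension_apply, WithLp.prod_inner_apply,
    RCLike.inner_apply, inner_add_left, inner_add_right, inner_smul_left, inner_smul_right,
    map_add, map_mul, Complex.conj_ofReal, inner_conj_symm, hvw]
  ring

end VacuumExtension

theorem IsSchurmannSeries.hasOperatorModel_boolMoment (hf : IsSchurmannSeries f) :
    HasOperatorModel (boolMoment f) := by
  obtain ⟨V, _, _, a, T, ξ, hT, hf⟩ := hf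
  let V' := UniformSpace.Completion V
  let Ω : WithLp 2 (ℂ × V') := WithLp.toLp 2 (1, 0)
  let J : V →ₗ[ℂ] WithLp 2 (ℂ × V') := (WithLp.linearEquiv 2 ℂ (ℂ × V')).symm.toLinearMap ∘ₗ
    LinearMap.inr ℂ ℂ V' ∘ₗ (UniformSpace.Completion.toComplL (𝕜 := ℂ) (E := V)).toLinearMap
  have hJ (v : V) : J v = WithLp.toLp 2 (0, (v : V')) := rfl
  let X (x : L) := vacuumExtension (a x) (T x).completion (ξ x : V')
  have hXΩ (x : L) : X x Ω = (a x : ℂ) • Ω + J (ξ x) := by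
    rw [hJ, vacuumExtension_apply, ← WithLp.toLp_smul, ← WithLp.toLp_add]
    simp
  have hXJ (x : L) (v : V) : X x (J v) = ⟪ξ x, v⟫_ℂ • Ω + J (T x v) := by
    rw [hJ, hJ, vacuumExtension_apply, ← WithLp.toLp_smul, ← WithLp.toLp_add]
    simp
  have hX (x : L) : (X x : WithLp 2 (ℂ × V') →ₗ[ℂ] WithLp 2 (ℂ × V')).IsSymmetric :=
    isSymmetric_vacuumExtension (a x) (isSelfAdjoint_completion (hT x)).isSymmetric _
  have hΩ : ‖Ω‖ = 1 := by simp [Ω]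
  refine ⟨WithLp 2 (ℂ × V'), inferInstance, inferInstance, X, Ω, hX, hΩ, fun l => ?_⟩
  rw [boolMoment_congr hf, inner_list_prod_eq_boolMoment_schurmannSeries J hΩ _ hXΩ hXJ]
  intro v
  simp [hJ, Ω]

end BooleanModels

section KernelSpaces

open scoped InnerProductSpace Matrix

variable {ι : Type*}

lemma posSemidef_gram {V : Type*} [SeminormedAddCommGroup V] [InnerProductSpace ℂ V] (ξ : ι → V) :
    (Matrix.gram ℂ ξ).PosSemidef := by
  refine ⟨Matrix.isHermitian_gram ℂ ξ, fun c => ?_⟩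
  have hsum : (c.sum fun i a => c.sum fun j b => star a * Matrix.gram ℂ ξ i j * b) =
      ⟪c.sum fun i a => a • ξ i, c.sum fun i a => a • ξ i⟫_ℂ := by
    simp only [Finsupp.sum, inner_sum, sum_inner, inner_smul_left, inner_smul_right,
      Matrix.gram_apply, RCLike.star_def, Finset.mul_sum]
    rw [Finset.sum_comm]
    exact sum_congr rfl fun i _ => sum_congr rfl fun j _ => by ring
  rw [hsum, inner_self_eq_norm_sq_to_K]
  norm_cast
  positivity

lemma posSemidef_of_tendsto {K : ℕ → Matrix ι ι ℂ} {K' : Matrix ι ι ℂ}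
    (hK : ∀ᶠ n in Filter.atTop, (K n).PosSemidef)
    (hlim : ∀ i j, Filter.Tendsto (fun n => K n i j) Filter.atTop (nhds (K' i j))) :
    K'.PosSemidef := by
  refine ⟨Matrix.IsHermitian.ext fun i j => tendsto_nhds_unique (hlim j i).star
    ((hlim i j).congr' ?_), fun c => ?_⟩
  · filter_upwards [hK] with n hn using (hn.isHermitian.apply i j).symm
  · have hsum : Filter.Tendsto
        (fun n => c.sum fun i a => c.sum fun j b => star a * K n i j * b) Filter.atTop
        (nhds (c.sum fun i a => c.sum fun j b => star a * K' i j * b)) :=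
      tendsto_finsetSum _ fun i _ => tendsto_finsetSum _ fun j _ =>
        ((hlim i j).const_mul _).mul_const _
    refine ge_of_tendsto hsum ?_
    filter_upwards [hK] with n hn using hn.2 c

/-- The free vector space on `ι`, with the semi-inner product whose Gram matrix on the basis
is the positive semidefinite kernel `K`. -/
def KernelSpace {K : Matrix ι ι ℂ} (_ : K.PosSemidef) := ι →₀ ℂ

namespace KernelSpace

variable {K : Matrix ι ι ℂ} (hK : K.PosSemidef)

noncomputable instance : AddCommGroup (KernelSpace hK) := inferInstanceAs (AddCommGroup (ι →₀ ℂ))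

noncomputable instance : Module ℂ (KernelSpace hK) := inferInstanceAs (Module ℂ (ι →₀ ℂ))

/-- The semi-inner product of `KernelSpace hK`. -/
noncomputable abbrev core : PreInnerProductSpace.Core ℂ (KernelSpace hK) where
  inner (p q : ι →₀ ℂ) := p.sum fun i a => q.sum fun j b => star a * K i j * b
  conj_inner_symm (p q : ι →₀ ℂ) := by
    rw [Finsupp.sum_comm]
    simp only [Finsupp.sum, map_sum]
    refine sum_congr rfl fun i _ => sum_congr rfl fun j _ => ?_
    rw [← hK.isHermitian.apply i j]
    simp only [Complex.star_def, map_mul, Complex.conj_conj]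
    ring
  re_inner_nonneg p := (RCLike.nonneg_iff.mp (hK.2 p)).1
  add_left (p q r : ι →₀ ℂ) := by
    refine Finsupp.sum_add_index' (fun i => by simp) fun i a b => ?_
    rw [← Finsupp.sum_add]
    simp only [star_add, add_mul]
  smul_left (p q : ι →₀ ℂ) c := by
    refine (Finsupp.sum_smul_index fun i => by simp).trans ?_
    simp only [Finsupp.mul_sum, star_mul', Complex.star_def, mul_assoc]

noncomputable instance : SeminormedAddCommGroup (KernelSpace hK) :=
  InnerProductSpace.Core.toSeminormedAddCommGroup (c := core hK)

noncomputable instance : InnerProductSpace ℂ (KernelSpace hK) := InnerProductSpace.ofCore (core hK)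

/-- The basis vectors of `KernelSpace hK`. -/
noncomputable def basis : Module.Basis ι ℂ (KernelSpace hK) := .ofRepr (.refl ℂ (ι →₀ ℂ))

lemma inner_basis (i j : ι) : ⟪basis hK i, basis hK j⟫_ℂ = K i j := by
  change Finsupp.sum (Finsupp.single i (1 : ℂ)) (fun i a =>
    Finsupp.sum (Finsupp.single j (1 : ℂ)) fun j b => star a * K i j * b) = _
  simp

end KernelSpace

section Boundedness

variable {V : Type*} [SeminormedAddCommGroup V] [InnerProductSpace ℂ V]
  (b : Module.Basis ι ℂ V) {T : V →ₗ[ℂ] V}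

lemma isSymmetric_of_basis (hT : ∀ i j, ⟪T (b i), b j⟫_ℂ = ⟪b i, T (b j)⟫_ℂ) :
    T.IsSymmetric := by
  have hleft (i : ι) : (innerₛₗ ℂ (T (b i)) : V →ₗ[ℂ] ℂ) = (innerₛₗ ℂ (b i)).comp T :=
    b.ext fun j => hT i j
  intro v w
  induction b.mem_span v using Submodule.span_induction with
  | mem v hv => obtain ⟨i, rfl⟩ := hv; exact LinearMap.congr_fun (hleft i) w
  | zero => simp
  | add u v _ _ hu hv => simp only [map_add, inner_add_left, hu, hv]
  | smul c v _ hv => simp only [map_smul, inner_smul_left, hv]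

lemma le_mul_of_sq_le_mul_of_le_geometric {a : ℕ → ℝ} {C D : ℝ} (ha : ∀ n, 0 ≤ a n)
    (hconvex : ∀ n, a (n + 1) ^ 2 ≤ a n * a (n + 2)) (hD : 0 < D)
    (hgrowth : ∀ n, a n ≤ C * D ^ n) : a 1 ≤ D * a 0 := by
  rcases (ha 0).eq_or_lt with h0 | h0
  · have h1 : a 1 = 0 := by
      simpa only [← h0, zero_mul, sq_nonpos_iff] using hconvex 0
    simp only [← h0, h1, mul_zero, le_refl]
  by_contra! hlt
  have hr : D < a 1 / a 0 := by rwa [lt_div_iff₀ h0]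
  set r := a 1 / a 0
  have hr0 : 0 < r := hD.trans hr
  have hratio (n : ℕ) : 0 < a n ∧ r * a n ≤ a (n + 1) := by
    induction n with
    | zero => exact ⟨h0, (div_mul_cancel₀ _ h0.ne').le⟩
    | succ n ih =>
      obtain ⟨hpos, hle⟩ := ih
      have hpos' : 0 < a (n + 1) := (mul_pos hr0 hpos).trans_le hle
      exact ⟨hpos', le_of_mul_le_mul_left (by nlinarith [hconvex n]) hpos⟩
  have hgeom (n : ℕ) : r ^ n * a 0 ≤ a n := by
    induction n with
    | zero => simp
    | succ n ih =>
      rw [pow_succ', mul_assoc]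
      exact (mul_le_mul_of_nonneg_left ih hr0.le).trans (hratio n).2
  obtain ⟨n, hn⟩ := pow_unbounded_of_one_lt (C / a 0) ((one_lt_div hD).mpr hr)
  rw [div_pow, div_lt_div_iff₀ h0 (by positivity)] at hn
  exact absurd ((hgeom n).trans (hgrowth n)) hn.not_ge

lemma norm_apply_le_of_growth {v : V} {D : ℝ} (hT : T.IsSymmetric) (hD : 0 < D)
    (hv : ∃ C : ℝ, ∀ n : ℕ, ‖(T ^ n) v‖ ≤ C * D ^ n) : ‖T v‖ ≤ D * ‖v‖ := by
  obtain ⟨C, hC⟩ := hv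
  refine le_mul_of_sq_le_mul_of_le_geometric (a := fun n => ‖(T ^ n) v‖)
    (fun n => norm_nonneg _) (fun n => ?_) hD hC
  have hshift : ⟪(T ^ (n + 1)) v, (T ^ (n + 1)) v⟫_ℂ = ⟪(T ^ n) v, (T ^ (n + 2)) v⟫_ℂ := by
    simp only [pow_succ' T, Module.End.mul_apply, hT _ _]
  calc ‖(T ^ (n + 1)) v‖ ^ 2 = ‖⟪(T ^ (n + 1)) v, (T ^ (n + 1)) v⟫_ℂ‖ := by
        simp [inner_self_eq_norm_sq_to_K]
    _ ≤ ‖(T ^ n) v‖ * ‖(T ^ (n + 2)) v‖ := hshift ▸ norm_inner_le_norm _ _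

lemma norm_apply_le_of_growth_basis {D : ℝ} (hT : T.IsSymmetric) (hD : 0 < D)
    (hb : ∀ i, ∃ C : ℝ, ∀ n : ℕ, ‖(T ^ n) (b i)‖ ≤ C * D ^ n) (v : V) : ‖T v‖ ≤ D * ‖v‖ := by
  refine norm_apply_le_of_growth hT hD ?_
  induction b.mem_span v using Submodule.span_induction with
  | mem v hv => obtain ⟨i, rfl⟩ := hv; exact hb i
  | zero => exact ⟨0, fun n => by simp⟩
  | add u v _ _ hu hv =>
    obtain ⟨C, hC⟩ := hu
    obtain ⟨C', hC'⟩ := hv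
    refine ⟨C + C', fun n => ?_⟩
    rw [map_add, add_mul]
    exact (norm_add_le _ _).trans (add_le_add (hC n) (hC' n))
  | smul c v _ hv =>
    obtain ⟨C, hC⟩ := hv
    refine ⟨‖c‖ * C, fun n => ?_⟩
    rw [map_smul, norm_smul, mul_assoc]
    exact mul_le_mul_of_nonneg_left (hC n) (norm_nonneg c)

end Boundedness

end KernelSpaces

section FockSpace

open scoped InnerProductSpace Matrix

variable (V : Type*) [SeminormedAddCommGroup V] [InnerProductSpace ℂ V]

/-- The inner products of elementary tensors in the full Fock space over `V`. -/
noncomputable def fockKernel : Matrix (List V) (List V) ℂ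
  | [], [] => 1
  | v :: s, w :: t => ⟪v, w⟫_ℂ * fockKernel s t
  | _, _ => 0

/-- The restriction of `fockKernel V` to tensors of rank less than `n`. -/
noncomputable def truncatedFockKernel : ℕ → Matrix (List V) (List V) ℂ
  | 0 => 0
  | n + 1 => Matrix.gram ℂ (fun s : List V => if s = [] then (1 : ℂ) else 0) +
      Matrix.gram ℂ (fun s : List V => s.headD 0) ⊙
        (truncatedFockKernel n).submatrix List.tail List.tail

lemma posSemidef_truncatedFockKernel (n : ℕ) : (truncatedFockKernel V n).PosSemidef := by
  induction n with
  | zero => exact Matrix.PosSemidef.zero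
  | succ n ih => exact (posSemidef_gram _).add ((posSemidef_gram _).hadamard (ih.submatrix _))

lemma truncatedFockKernel_apply {n : ℕ} : ∀ {s t : List V}, s.length < n →
    truncatedFockKernel V n s t = fockKernel V s t := by
  induction n with
  | zero => exact fun h => absurd h (Nat.not_lt_zero _)
  | succ n ih =>
    intro s t hs
    rcases s with _ | ⟨v, s⟩ <;> rcases t with _ | ⟨w, t⟩
    case cons.cons =>
      have hst := ih (t := t) (Nat.lt_of_succ_lt_succ hs)
      simp [truncatedFockKernel, fockKernel, Matrix.gram_apply, hst]
    all_goals simp [truncatedFockKernel, fockKernel, Matrix.gram_apply]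

lemma posSemidef_fockKernel : (fockKernel V).PosSemidef :=
  posSemidef_of_tendsto (.of_forall (posSemidef_truncatedFockKernel V)) fun s _ =>
    tendsto_const_nhds.congr' <| (Filter.eventually_gt_atTop s.length).mono fun _ hn =>
      (truncatedFockKernel_apply V hn).symm

/-- The algebraic full Fock space over `V`, with one basis vector for each formal elementary
tensor: multilinearity of the tensors holds only up to vectors of seminorm zero. -/
abbrev FockSpace := KernelSpace (posSemidef_fockKernel V)

variable {V}

/-- The elementary tensor with the given factors. -/
noncomputable def fockTensor : List V → FockSpace V := KernelSpace.basis (posSemidef_fockKernel V)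

lemma inner_fockTensor (s t : List V) : ⟪fockTensor s, fockTensor t⟫_ℂ = fockKernel V s t :=
  KernelSpace.inner_basis _ s t

lemma norm_fockTensor_nil : ‖fockTensor ([] : List V)‖ = 1 := by
  rw [norm_eq_sqrt_re_inner (𝕜 := ℂ), inner_fockTensor, fockKernel]
  simp

lemma norm_fockTensor_cons (v : V) (s : List V) :
    ‖fockTensor (v :: s)‖ = ‖v‖ * ‖fockTensor s‖ := by
  rw [← sq_eq_sq₀ (norm_nonneg _) (by positivity), mul_pow, ← Complex.ofReal_inj]
  push_cast
  simp only [← Complex.coe_algebraMap, ← inner_self_eq_norm_sq_to_K, inner_fockTensor, fockKernel]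

/-- Creation by `ξ`, plus annihilation by `ξ`, plus the second quantisation of `T` acting on the
first tensor factor, plus the scalar `a`. -/
noncomputable def fockFieldOperator (a : ℝ) (T : V →L[ℂ] V) (ξ : V) :
    FockSpace V →ₗ[ℂ] FockSpace V :=
  (KernelSpace.basis (posSemidef_fockKernel V)).constr ℂ fun
    | [] => fockTensor [ξ] + (a : ℂ) • fockTensor []
    | v :: s => (fockTensor (ξ :: v :: s) + (a : ℂ) • fockTensor (v :: s)) +
        (fockTensor (T v :: s) + ⟪ξ, v⟫_ℂ • fockTensor s)

variable (a : ℝ) (T : V →L[ℂ] V) (ξ v : V) (s : List V)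

lemma fockFieldOperator_fockTensor_nil : fockFieldOperator a T ξ (fockTensor []) =
    fockTensor [ξ] + (a : ℂ) • fockTensor [] :=
  Module.Basis.constr_basis ..

lemma fockFieldOperator_fockTensor_cons : fockFieldOperator a T ξ (fockTensor (v :: s)) =
    (fockTensor (ξ :: v :: s) + (a : ℂ) • fockTensor (v :: s)) +
      (fockTensor (T v :: s) + ⟪ξ, v⟫_ℂ • fockTensor s) :=
  Module.Basis.constr_basis ..

variable {T} in
lemma isSymmetric_fockFieldOperator (hT : (T : V →ₗ[ℂ] V).IsSymmetric) :
    (fockFieldOperator a T ξ).IsSymmetric := by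
  refine isSymmetric_of_basis (KernelSpace.basis (posSemidef_fockKernel V)) fun s t => ?_
  change ⟪fockFieldOperator a T ξ (fockTensor s), fockTensor t⟫_ℂ =
    ⟪fockTensor s, fockFieldOperator a T ξ (fockTensor t)⟫_ℂ
  have hvw (v w : V) : ⟪T v, w⟫_ℂ = ⟪v, T w⟫_ℂ := hT v w
  rcases s with _ | ⟨v, s⟩ <;> rcases t with _ | ⟨w, t⟩ <;>
    simp only [fockFieldOperator_fockTensor_nil, fockFieldOperator_fockTensor_cons,
      inner_add_left, inner_add_right, inner_smul_left, inner_smul_right, inner_fockTensor,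
      fockKernel, Complex.conj_ofReal, inner_conj_symm, hvw] <;> ring

lemma norm_fockFieldOperator_pow_fockTensor_le {D : ℝ} (hD : 2 * ‖ξ‖ + |a| + ‖T‖ ≤ D) (n : ℕ) :
    ∀ s : List V, ‖(fockFieldOperator a T ξ ^ n) (fockTensor s)‖ ≤ ‖fockTensor s‖ * D ^ n := by
  have hD0 : 0 ≤ D := le_trans (by positivity) hD
  induction n with
  | zero => simp
  | succ n ih =>
    intro s
    set Y := fockFieldOperator a T ξ
    have hsmul (c : ℂ) (t : List V) :
        ‖(Y ^ n) (c • fockTensor t)‖ ≤ ‖c‖ * ‖fockTensor t‖ * D ^ n := by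
      rw [map_smul, norm_smul, mul_assoc]
      exact mul_le_mul_of_nonneg_left (ih t) (norm_nonneg c)
    rw [pow_succ, pow_succ', Module.End.mul_apply, ← mul_assoc]
    rcases s with _ | ⟨v, s⟩
    · rw [fockFieldOperator_fockTensor_nil, map_add]
      refine (norm_add_le_of_le (ih _) (hsmul _ _)).trans ?_
      rw [norm_fockTensor_cons, Complex.norm_real, Real.norm_eq_abs, ← add_mul]
      gcongr
      rw [norm_fockTensor_nil]
      linarith [norm_nonneg ξ, norm_nonneg T]
    · rw [fockFieldOperator_fockTensor_cons, map_add, map_add, map_add]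
      refine (norm_add_le_of_le (norm_add_le_of_le (ih _) (hsmul _ _))
        (norm_add_le_of_le (ih _) (hsmul _ _))).trans ?_
      simp only [norm_fockTensor_cons, Complex.norm_real, Real.norm_eq_abs, ← add_mul]
      gcongr
      calc (‖ξ‖ + |a|) * (‖v‖ * ‖fockTensor s‖) + (‖T v‖ + ‖⟪ξ, v⟫_ℂ‖) * ‖fockTensor s‖
          ≤ (‖ξ‖ + |a|) * (‖v‖ * ‖fockTensor s‖) + (‖T‖ * ‖v‖ + ‖ξ‖ * ‖v‖) * ‖fockTensor s‖ := by
            gcongr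
            exacts [T.le_opNorm v, norm_inner_le_norm ξ v]
        _ = ‖v‖ * ‖fockTensor s‖ * (2 * ‖ξ‖ + |a| + ‖T‖) := by ring
        _ ≤ ‖v‖ * ‖fockTensor s‖ * D := by gcongr

lemma norm_fockFieldOperator_le (hT : (T : V →ₗ[ℂ] V).IsSymmetric) (p : FockSpace V) :
    ‖fockFieldOperator a T ξ p‖ ≤ (2 * ‖ξ‖ + |a| + ‖T‖ + 1) * ‖p‖ :=
  norm_apply_le_of_growth_basis (KernelSpace.basis (posSemidef_fockKernel V))
    (isSymmetric_fockFieldOperator a ξ hT) (by positivity) (fun s => ⟨‖fockTensor s‖, fun n =>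
      norm_fockFieldOperator_pow_fockTensor_le a T ξ (le_add_of_nonneg_right zero_le_one) n s⟩) p

variable {L : Type*} {f : List L → ℂ}

lemma inner_fockTensor_list_prod_eq_fockWalk {a : L → ℝ} {T : L → V →L[ℂ] V} {ξ : L → V}
    {X : L → FockSpace V →L[ℂ] FockSpace V} (hT : ∀ x, (T x : V →ₗ[ℂ] V).IsSymmetric)
    (hX : ∀ x p, X x p = fockFieldOperator (a x) (T x) (ξ x) p)
    (hf : ∀ l ≠ [], f l = schurmannSeries a T ξ l) (v : List L) :
    ∀ s : List (List L), (∀ u ∈ s, u ≠ []) →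
      ⟪fockTensor (s.map fun u => blockVector T ξ u.reverse),
        (v.map X).prod (fockTensor [])⟫_ℂ = fockWalk f s v := by
  induction v with
  | nil =>
    intro s _
    rw [List.map_nil, List.prod_nil, one_apply_eq_self, inner_fockTensor]
    cases s <;> simp [fockKernel, fockWalk]
  | cons x v ih =>
    intro s hs
    set p := (v.map X).prod (fockTensor []) with hp
    have hsingle : f [x] = a x := hf [x] (List.cons_ne_nil x [])
    rw [List.map_cons, List.prod_cons, mul_apply_eq_comp, ← hp, hX,
      ← isSymmetric_fockFieldOperator (a x) (ξ x) (hT x)]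
    rcases s with _ | ⟨u, s⟩
    · have hnil := ih [] hs
      have hpush := ih [[x]] (by simp)
      simp only [List.map_cons, List.map_nil, List.reverse_singleton, blockVector] at hnil hpush
      rw [List.map_nil, fockFieldOperator_fockTensor_nil, inner_add_left, inner_smul_left,
        Complex.conj_ofReal, hnil, hpush, fockWalk, hsingle]
    · have hu : u.reverse ≠ [] := List.reverse_ne_nil_iff.mpr (hs u List.mem_cons_self)
      have hs' := List.forall_mem_cons.mp hs
      have hpush := ih ([x] :: u :: s) (by simpa using hs')
      have hskip := ih (u :: s) hs
      have happend := ih ((u ++ [x]) :: s) (by simpa using hs'.2)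
      have hclose := ih s hs'.2
      have hpair : ⟪blockVector T ξ u.reverse, ξ x⟫_ℂ = f (u ++ [x]) := by
        rw [hf _ (by simp), ← inner_blockVector_reverse hT hs'.1 (List.cons_ne_nil x [])]
        rfl
      simp only [List.map_cons, List.reverse_singleton, List.reverse_append,
        List.singleton_append, blockVector_cons x hu, blockVector] at hpush hskip happend
      rw [List.map_cons, fockFieldOperator_fockTensor_cons]
      simp only [inner_add_left, inner_smul_left, Complex.conj_ofReal, inner_conj_symm,
        hpair, hpush, hskip, happend, hclose, fockWalk, hsingle]

theorem IsSchurmannSeries.hasOperatorModel_freeMoment (hf : IsSchurmannSeries f) :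
    HasOperatorModel (freeMoment f) := by
  obtain ⟨V, _, _, a, T, ξ, hT, hf⟩ := hf
  let X (x : L) : FockSpace V →L[ℂ] FockSpace V :=
    (fockFieldOperator (a x) (T x) (ξ x)).mkContinuous _
      (norm_fockFieldOperator_le (a x) (T x) (ξ x) (hT x))
  refine ⟨FockSpace V, inferInstance, inferInstance, X, fockTensor [],
    fun x => isSymmetric_fockFieldOperator (a x) (ξ x) (hT x), norm_fockTensor_nil, fun l => ?_⟩
  exact (inner_fockTensor_list_prod_eq_fockWalk hT (fun x p => rfl) hf l [] (by simp)).symm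

end FockSpace

section SmallCumulants

variable {L R : Type*}

lemma fockWalk_zero_cons [CommRing R] (v : List L) :
    ∀ u s, fockWalk (0 : List L → R) (u :: s) v = 0 := by
  induction v with
  | nil => simp [fockWalk]
  | cons x v ih => simp [fockWalk, ih]

lemma firstPassage_zero_cons [CommRing R] (v : List L) :
    ∀ u s, firstPassage (0 : List L → R) (u :: s) v = 0 := by
  induction v with
  | nil => simp [firstPassage]
  | cons x v ih => simp [firstPassage, ih]

lemma pinnedWalk_zero [CommRing R] (u v : List L) : pinnedWalk (0 : List L → R) u v = 0 := by
  rw [pinnedWalk, fockWalk_zero_cons, Pi.zero_apply, zero_mul, zero_add]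

lemma irreducibleWalk_zero [CommRing R] (u v : List L) :
    irreducibleWalk (0 : List L → R) u v = 0 := by
  rw [irreducibleWalk, firstPassage_zero_cons, Pi.zero_apply, zero_mul, zero_add]

variable (f : List L → ℂ)

lemma differentiable_firstPassage_smul (v : List L) : ∀ s,
    Differentiable ℂ fun ε : ℂ => firstPassage (ε • f) s v := by
  induction v with
  | nil => rintro (_ | ⟨u, s⟩) <;> simp [firstPassage]
  | cons x v ih =>
    rintro (_ | ⟨u, s⟩) <;> simp only [firstPassage, Pi.smul_apply, smul_eq_mul] <;> fun_prop

lemma hasDerivAt_pinnedWalk_smul : ∀ u v : List L,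
    HasDerivAt (fun ε : ℂ => pinnedWalk (ε • f) u v) (f (u ++ v)) 0
  | u, [] => by
    simpa only [pinnedWalk_nil, List.append_nil, Pi.smul_apply, smul_eq_mul, one_mul] using
      (hasDerivAt_id' (0 : ℂ)).mul_const (f u)
  | u, x :: v => by
    have hproduct (i : ℕ) : HasDerivAt (fun ε : ℂ =>
        irreducibleWalk (ε • f) [x] (v.take i) * pinnedWalk (ε • f) u (v.drop i)) 0 0 := by
      have hirr : DifferentiableAt ℂ (fun ε : ℂ => irreducibleWalk (ε • f) [x] (v.take i)) 0 := by
        have hfirst (s : List (List L)) := differentiable_firstPassage_smul f (v.take i) s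
        simp only [irreducibleWalk, Pi.smul_apply, smul_eq_mul]
        fun_prop
      simpa only [zero_smul, pinnedWalk_zero, irreducibleWalk_zero, mul_zero, zero_mul, add_zero]
        using hirr.hasDerivAt.fun_mul (hasDerivAt_pinnedWalk_smul u (v.drop i))
    simpa only [pinnedWalk_cons, Finset.sum_const_zero, add_zero, List.append_assoc,
      List.singleton_append] using (hasDerivAt_pinnedWalk_smul (u ++ [x]) v).fun_add
        (HasDerivAt.fun_sum fun i (_ : i ∈ range (v.length + 1)) => hproduct i)
termination_by _ v => v.length
decreasing_by all_goals simp

theorem tendsto_nat_mul_freeMoment_inv_smul {l : List L} (hl : l ≠ []) :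
    Filter.Tendsto (fun N : ℕ => (N : ℂ) * freeMoment ((N : ℂ)⁻¹ • f) l) Filter.atTop
      (nhds (f l)) := by
  obtain ⟨x, v, rfl⟩ := List.exists_cons_of_ne_nil hl
  have hinv : Filter.Tendsto (fun N : ℕ => (N : ℂ)⁻¹) Filter.atTop (nhdsWithin 0 {0}ᶜ) :=
    tendsto_nhdsWithin_iff.mpr ⟨tendsto_inv_atTop_nhds_zero_nat,
      (Filter.eventually_ne_atTop 0).mono fun N hN => inv_ne_zero (Nat.cast_ne_zero.mpr hN)⟩
  have hslope := (hasDerivAt_pinnedWalk_smul f [x] v).tendsto_slope_zero.comp hinv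
  simpa only [Function.comp_def, zero_add, zero_smul, pinnedWalk_zero, sub_zero, inv_inv,
    smul_eq_mul, freeMoment_cons, List.singleton_append] using hslope

end SmallCumulants

section Growth

variable {D : ℝ}

lemma norm_sum_mul_le_of_geometric {g h : ℕ → ℂ} {C : ℝ} {n : ℕ} (hC : 0 ≤ C) (hD : 0 ≤ D)
    (hg : ∀ i ≤ n, ‖g i‖ ≤ D ^ (i + 1)) (hh : ∀ i ≤ n, ‖h i‖ ≤ C * (2 * D) ^ (n - i)) :
    ‖∑ i ∈ range (n + 1), g i * h i‖ ≤ C * (2 * D) ^ (n + 1) := by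
  have hsummand (i : ℕ) (hi : i ∈ range (n + 1)) :
      ‖g i * h i‖ ≤ (1 / 2) ^ i * (C * (2 * D) ^ (n + 1) / 2) := by
    have hin : i ≤ n := Nat.le_of_lt_succ (mem_range.mp hi)
    calc ‖g i * h i‖ ≤ D ^ (i + 1) * (C * (2 * D) ^ (n - i)) := by
          rw [norm_mul]
          exact mul_le_mul (hg i hin) (hh i hin) (norm_nonneg _) (by positivity)
      _ = (1 / 2) ^ i * (C * (2 * D) ^ (i + 1 + (n - i)) / 2) := by
          rw [pow_add (2 * D), mul_pow 2 D (i + 1), pow_succ (2 : ℝ) i, one_div, inv_pow]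
          field_simp
      _ = (1 / 2) ^ i * (C * (2 * D) ^ (n + 1) / 2) := by
          rw [add_right_comm, Nat.add_sub_cancel' hin]
  calc _ ≤ (∑ i ∈ range (n + 1), (1 / 2 : ℝ) ^ i) * (C * (2 * D) ^ (n + 1) / 2) := by
        rw [Finset.sum_mul]
        exact norm_sum_le_of_le _ hsummand
    _ ≤ 2 * (C * (2 * D) ^ (n + 1) / 2) := by gcongr; exact sum_geometric_two_le (n + 1)
    _ = C * (2 * D) ^ (n + 1) := by ring

variable {L : Type*} {f : List L → ℂ}

lemma norm_pinnedWalk_le (hD : 0 ≤ D) (hfree : ∀ l, ‖freeMoment f l‖ ≤ D ^ l.length)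
    (hbool : ∀ l ≠ [], ‖freeToBoolean f l‖ ≤ D ^ l.length) {u : List L} (hu : u ≠ []) :
    ∀ v, ‖pinnedWalk f u v‖ ≤ (4 * D) ^ u.length * (2 * D) ^ v.length := by
  induction u using List.reverseRecOn with
  | nil => exact absurd rfl hu
  | append_singleton u x ih =>
    intro v
    rcases eq_or_ne u [] with rfl | hu
    · rw [List.nil_append, ← freeMoment_cons]
      calc ‖freeMoment f (x :: v)‖ ≤ (1 * D) ^ 1 * (1 * D) ^ v.length := by
            simpa only [one_mul, ← pow_add, add_comm 1, List.length_cons] using hfree (x :: v)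
        _ ≤ (4 * D) ^ 1 * (2 * D) ^ v.length := by gcongr <;> norm_num
    have hsum : ‖∑ i ∈ range (v.length + 1),
        freeToBoolean f (x :: v.take i) * pinnedWalk f u (v.drop i)‖ ≤
          (4 * D) ^ u.length * (2 * D) ^ (v.length + 1) := by
      refine norm_sum_mul_le_of_geometric (by positivity) hD (fun i hi => ?_) fun i _ => ?_
      · simpa only [List.length_cons, List.length_take_of_le hi] using
          hbool (x :: v.take i) (List.cons_ne_nil _ _)
      · simpa only [List.length_drop] using ih hu (v.drop i)
    rw [pinnedWalk_append_singleton]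
    calc _ ≤ (4 * D) ^ u.length * (2 * D) ^ (v.length + 1) +
          (4 * D) ^ u.length * (2 * D) ^ (v.length + 1) := norm_sub_le_of_le (ih hu (x :: v)) hsum
      _ = _ := by rw [List.length_append, List.length_singleton]; ring

lemma norm_le_pow_of_freeMoment_le_of_freeToBoolean_le (hD : 0 ≤ D)
    (hfree : ∀ l, ‖freeMoment f l‖ ≤ D ^ l.length)
    (hbool : ∀ l ≠ [], ‖freeToBoolean f l‖ ≤ D ^ l.length) {l : List L} (hl : l ≠ []) :
    ‖f l‖ ≤ (4 * D) ^ l.length := by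
  simpa only [pinnedWalk_nil, List.length_nil, pow_zero, mul_one] using
    norm_pinnedWalk_le hD hfree hbool hl []

end Growth

section InfinitelyDivisibleCumulants

open scoped InnerProductSpace

variable {L : Type} {f m : List L → ℂ}

lemma inner_list_prod_reverse_append {V : Type*} [SeminormedAddCommGroup V]
    [InnerProductSpace ℂ V] {X : L → V →L[ℂ] V} (hX : ∀ x, (X x : V →ₗ[ℂ] V).IsSymmetric)
    (u v : List L) (p q : V) :
    ⟪p, ((u.reverse ++ v).map X).prod q⟫_ℂ = ⟪(u.map X).prod p, (v.map X).prod q⟫_ℂ := by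
  induction u generalizing v with
  | nil => rfl
  | cons x u ih =>
    rw [List.reverse_cons, List.append_assoc, ih, List.singleton_append, List.map_cons,
      List.map_cons, List.prod_cons, List.prod_cons, mul_apply_eq_comp, mul_apply_eq_comp]
    exact (hX x _ _).symm

lemma HasOperatorModel.posSemidef (hm : HasOperatorModel m) :
    (Matrix.of fun u v : List L => m (u.reverse ++ v)).PosSemidef := by
  obtain ⟨V, _, _, X, Ω, hX, -, hm⟩ := hm
  convert posSemidef_gram fun u : List L => (u.map X).prod Ω using 1
  ext u v
  rw [Matrix.of_apply, hm, inner_list_prod_reverse_append hX, Matrix.gram_apply]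

lemma HasOperatorModel.star_apply (hm : HasOperatorModel m) (l : List L) :
    star (m l) = m l.reverse := by
  simpa using hm.posSemidef.isHermitian.apply l []

lemma HasOperatorModel.exists_norm_le_pow [Finite L] (hm : HasOperatorModel m) :
    ∃ B : ℝ, ∀ l, ‖m l‖ ≤ B ^ l.length := by
  obtain ⟨V, _, _, X, Ω, -, hΩ, hm⟩ := hm
  obtain ⟨A, hA⟩ := Finite.bddAbove_range fun x => ‖X x‖
  have hX (x : L) : ‖X x‖ ≤ max A 0 := (hA (Set.mem_range_self x)).trans (le_max_left A 0)
  have hprod (l : List L) : ‖(l.map X).prod Ω‖ ≤ max A 0 ^ l.length := by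
    induction l with
    | nil => simp [hΩ]
    | cons x l ih =>
      rw [List.map_cons, List.prod_cons, mul_apply_eq_comp, List.length_cons, pow_succ']
      exact ((X x).le_opNorm _).trans
        (mul_le_mul (hX x) ih (norm_nonneg _) (le_max_right A 0))
  refine ⟨max A 0, fun l => ?_⟩
  rw [hm]
  simpa only [hΩ, one_mul] using
    (norm_inner_le_norm Ω ((l.map X).prod Ω)).trans
      (mul_le_mul_of_nonneg_left (hprod l) (norm_nonneg Ω))

/-- The Gram matrix that `f` prescribes for the vectors `blockVector T ξ u` of the nonempty words
`u`. -/
def wordKernel (f : List L → ℂ) : Matrix {u : List L // u ≠ []} {u : List L // u ≠ []} ℂ :=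
  .of fun u v => f (u.1.reverse ++ v.1)

section WordSpace

variable (hf : (wordKernel f).PosSemidef)

/-- The vector of a nonempty word, playing the role of `blockVector T ξ u`. -/
noncomputable def wordVector (u : List L) (hu : u ≠ []) : KernelSpace hf :=
  KernelSpace.basis hf ⟨u, hu⟩

/-- Left multiplication of nonempty words by the letter `x`. -/
noncomputable def consOperator (x : L) : KernelSpace hf →ₗ[ℂ] KernelSpace hf :=
  (KernelSpace.basis hf).constr ℂ fun u => wordVector hf (x :: u.1) (List.cons_ne_nil x u.1)

lemma inner_wordVector {u v : List L} (hu : u ≠ []) (hv : v ≠ []) :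
    ⟪wordVector hf u hu, wordVector hf v hv⟫_ℂ = f (u.reverse ++ v) :=
  KernelSpace.inner_basis hf _ _

lemma consOperator_wordVector (x : L) {u : List L} (hu : u ≠ []) :
    consOperator hf x (wordVector hf u hu) = wordVector hf (x :: u) (List.cons_ne_nil x u) :=
  Module.Basis.constr_basis ..

lemma isSymmetric_consOperator (x : L) : (consOperator hf x).IsSymmetric := by
  refine isSymmetric_of_basis (KernelSpace.basis hf) fun u v => ?_
  change ⟪consOperator hf x (wordVector hf u.1 u.2), wordVector hf v.1 v.2⟫_ℂ =
    ⟪wordVector hf u.1 u.2, consOperator hf x (wordVector hf v.1 v.2)⟫_ℂ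
  rw [consOperator_wordVector, consOperator_wordVector, inner_wordVector, inner_wordVector,
    List.reverse_cons, List.append_assoc, List.singleton_append]

lemma consOperator_pow_wordVector (x : L) {u : List L} (hu : u ≠ []) (n : ℕ) :
    (consOperator hf x ^ n) (wordVector hf u hu) =
      wordVector hf (List.replicate n x ++ u) (List.append_ne_nil_of_right_ne_nil _ hu) := by
  induction n with
  | zero => rfl
  | succ n ih =>
    rw [pow_succ', Module.End.mul_apply, ih, consOperator_wordVector]
    rfl

lemma norm_wordVector_le {B : ℝ} (hB : 0 ≤ B) (hgrowth : ∀ l ≠ [], ‖f l‖ ≤ B ^ l.length)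
    {u : List L} (hu : u ≠ []) : ‖wordVector hf u hu‖ ≤ B ^ u.length := by
  refine (sq_le_sq₀ (norm_nonneg _) (by positivity)).1 ?_
  calc ‖wordVector hf u hu‖ ^ 2 = ‖⟪wordVector hf u hu, wordVector hf u hu⟫_ℂ‖ := by
        simp [inner_self_eq_norm_sq_to_K]
    _ ≤ B ^ (u.reverse ++ u).length := by
        rw [inner_wordVector]
        exact hgrowth _ (List.append_ne_nil_of_right_ne_nil _ hu)
    _ = (B ^ u.length) ^ 2 := by
        rw [List.length_append, List.length_reverse, pow_add, sq]

lemma norm_consOperator_le {B : ℝ} (hB : 0 < B) (hgrowth : ∀ l ≠ [], ‖f l‖ ≤ B ^ l.length)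
    (x : L) (p : KernelSpace hf) : ‖consOperator hf x p‖ ≤ B * ‖p‖ := by
  refine norm_apply_le_of_growth_basis (KernelSpace.basis hf) (isSymmetric_consOperator hf x) hB
    (fun u => ⟨B ^ u.1.length, fun n => ?_⟩) p
  change ‖(consOperator hf x ^ n) (wordVector hf u.1 u.2)‖ ≤ _
  rw [consOperator_pow_wordVector, ← pow_add, add_comm]
  simpa only [List.length_append, List.length_replicate] using
    norm_wordVector_le hf hB.le hgrowth
      (List.append_ne_nil_of_right_ne_nil (List.replicate n x) u.2)

end WordSpace

theorem IsSchurmannSeries.of_posSemidef_wordKernel {B : ℝ} (hf : (wordKernel f).PosSemidef)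
    (hreal : ∀ x, star (f [x]) = f [x]) (hB : 0 < B) (hgrowth : ∀ l ≠ [], ‖f l‖ ≤ B ^ l.length) :
    IsSchurmannSeries f := by
  let T (x : L) : KernelSpace hf →L[ℂ] KernelSpace hf :=
    (consOperator hf x).mkContinuous B (norm_consOperator_le hf hB hgrowth x)
  let ξ (x : L) : KernelSpace hf := wordVector hf [x] (List.cons_ne_nil x [])
  have hblock {l : List L} (hl : l ≠ []) : blockVector T ξ l = wordVector hf l hl := by
    induction l with
    | nil => exact absurd rfl hl
    | cons x l ih =>
      rcases eq_or_ne l [] with rfl | hl'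
      · rfl
      · rw [blockVector_cons x hl', ih hl']
        exact consOperator_wordVector hf x hl'
  refine ⟨KernelSpace hf, inferInstance, inferInstance, fun x => (f [x]).re, T, ξ,
    isSymmetric_consOperator hf, fun l hl => ?_⟩
  obtain ⟨x, l, rfl⟩ := List.exists_cons_of_ne_nil hl
  rcases eq_or_ne l [] with rfl | hl'
  · exact (Complex.conj_eq_iff_re.mp (hreal x)).symm
  · rw [schurmannSeries_cons x hl', hblock hl', inner_wordVector]
    rfl

lemma posSemidef_wordKernel_of_hasOperatorModel_freeMoment
    (hf : ∀ N : ℕ, 0 < N → HasOperatorModel (freeMoment ((N : ℂ)⁻¹ • f))) :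
    (wordKernel f).PosSemidef := by
  refine posSemidef_of_tendsto (K := fun N : ℕ =>
    (N : ℂ) • wordKernel (freeMoment ((N : ℂ)⁻¹ • f))) ?_ fun u v =>
      tendsto_nat_mul_freeMoment_inv_smul f (List.append_ne_nil_of_right_ne_nil _ v.2)
  filter_upwards [Filter.eventually_gt_atTop 0] with N hN
  exact ((hf N hN).posSemidef.submatrix Subtype.val).smul (Nat.cast_nonneg N)

lemma exists_norm_le_pow_of_hasOperatorModel_freeMoment [Finite L]
    (hf : HasOperatorModel (freeMoment f)) : ∃ B : ℝ, 0 < B ∧ ∀ l ≠ [], ‖f l‖ ≤ B ^ l.length := by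
  obtain ⟨C, hC⟩ := hf.exists_norm_le_pow
  obtain ⟨C', hC'⟩ := (IsSchurmannSeries.of_hasOperatorModel_boolMoment
    (boolMoment_freeToBoolean f ▸ hf)).exists_norm_le_pow
  set D := max 1 (max |C| |C'|)
  have hD : 0 < D := zero_lt_one.trans_le (le_max_left _ _)
  have hpow {B : ℝ} (hB : |B| ≤ D) (n : ℕ) : B ^ n ≤ D ^ n :=
    (le_abs_self _).trans (by rw [abs_pow]; gcongr)
  have hCD : |C| ≤ D := (le_max_left _ _).trans (le_max_right _ _)
  have hCD' : |C'| ≤ D := (le_max_right _ _).trans (le_max_right _ _)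
  exact ⟨4 * D, by positivity, fun l hl => norm_le_pow_of_freeMoment_le_of_freeToBoolean_le hD.le
    (fun l => (hC l).trans (hpow hCD _)) (fun l hl => (hC' l hl).trans (hpow hCD' _)) hl⟩

theorem IsSchurmannSeries.of_hasOperatorModel_freeMoment [Finite L]
    (hf : ∀ N : ℕ, 0 < N → HasOperatorModel (freeMoment ((N : ℂ)⁻¹ • f))) :
    IsSchurmannSeries f := by
  have hf₁ : HasOperatorModel (freeMoment f) := by
    simpa only [Nat.cast_one, inv_one, one_smul] using hf 1 one_pos
  obtain ⟨B, hB, hgrowth⟩ := exists_norm_le_pow_of_hasOperatorModel_freeMoment hf₁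
  refine .of_posSemidef_wordKernel (posSemidef_wordKernel_of_hasOperatorModel_freeMoment hf)
    (fun x => ?_) hB hgrowth
  simpa only [freeMoment_cons, pinnedWalk_nil, List.reverse_singleton] using hf₁.star_apply [x]

end InfinitelyDivisibleCumulants

section InfiniteDivisibility

variable {k : ℕ} {μ : Dist k} {f : NCSeries k}

lemma wordCoeff_const_mul (c : ℂ) (f : NCSeries k) :
    ∀ l ≠ [], wordCoeff (fun n w => c * f n w) l = (c • wordCoeff f) l := by
  refine forall_ofFn_iff.1 fun n w => ?_
  rw [Pi.smul_apply, wordCoeff_ofFn, wordCoeff_ofFn, smul_eq_mul]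

lemma IsRTransform.wordMoment_eq (hμ : IsDalg μ) (h : IsRTransform μ f) :
    wordMoment μ = freeMoment (wordCoeff f) := by
  funext l
  rcases eq_or_ne l [] with rfl | hl
  · rw [wordMoment_nil hμ, freeMoment_nil]
  · exact (isRTransform_iff μ f).1 h l hl

lemma IsEtaSeries.wordMoment_eq (hμ : IsDalg μ) (h : IsEtaSeries μ f) :
    wordMoment μ = boolMoment (wordCoeff f) := by
  funext l
  rcases eq_or_ne l [] with rfl | hl
  · rw [wordMoment_nil hμ, boolMoment_nil]
  · exact (isEtaSeries_iff μ f).1 h l hl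

theorem exists_isDc_isEtaSeries_iff :
    (∃ μ : Dist k, IsDc μ ∧ IsEtaSeries μ f) ↔ IsSchurmannSeries (wordCoeff f) := by
  constructor
  · rintro ⟨μ, hμ, hη⟩
    exact .of_hasOperatorModel_boolMoment (hη.wordMoment_eq hμ.1 ▸ hμ.hasOperatorModel)
  · intro hf
    obtain ⟨μ, hμ, hmom⟩ := hf.hasOperatorModel_boolMoment.exists_isDc
    exact ⟨μ, hμ, (isEtaSeries_iff μ f).2 fun l _ => congrFun hmom l⟩

lemma IsSchurmannSeries.exists_isDc_isRTransform (hf : IsSchurmannSeries (wordCoeff f)) :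
    ∃ μ : Dist k, IsDc μ ∧ IsRTransform μ f := by
  obtain ⟨μ, hμ, hmom⟩ := hf.hasOperatorModel_freeMoment.exists_isDc
  exact ⟨μ, hμ, (isRTransform_iff μ f).2 fun l _ => congrFun hmom l⟩

lemma IsInfDiv.hasOperatorModel_freeMoment (hμ : IsInfDiv μ) (hR : IsRTransform μ f) {N : ℕ}
    (hN : 0 < N) : HasOperatorModel (freeMoment ((N : ℂ)⁻¹ • wordCoeff f)) := by
  obtain ⟨ν, hν, g, hg, hNg⟩ := hμ.2 N hN
  have hf : ∀ l ≠ [], wordCoeff f l = wordCoeff (fun n w => (N : ℂ) * g n w) l :=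
    eq_of_freeMoment_eq <| (hR.wordMoment_eq hμ.1.1).symm.trans (hNg.wordMoment_eq hμ.1.1)
  have hroot : ∀ l ≠ [], wordCoeff g l = ((N : ℂ)⁻¹ • wordCoeff f) l := fun l hl => by
    rw [Pi.smul_apply, hf l hl, wordCoeff_const_mul _ _ l hl, Pi.smul_apply,
      inv_smul_smul₀ (Nat.cast_ne_zero.2 hN.ne')]
  rw [← freeMoment_congr hroot, ← hg.wordMoment_eq hν.1]
  exact hν.hasOperatorModel

lemma IsSchurmannSeries.exists_isNFoldFree (hf : IsSchurmannSeries (wordCoeff f))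
    (hR : IsRTransform μ f) {N : ℕ} (hN : 0 < N) : ∃ ν : Dist k, IsDc ν ∧ IsNFoldFree N ν μ := by
  have hroot : IsSchurmannSeries (wordCoeff fun n w => (N : ℂ)⁻¹ * f n w) := by
    refine (hf.ofReal_smul (inv_nonneg.2 N.cast_nonneg)).congr fun l hl => ?_
    rw [Complex.ofReal_inv, Complex.ofReal_natCast, wordCoeff_const_mul _ _ l hl]
  obtain ⟨ν, hν, hRν⟩ := hroot.exists_isDc_isRTransform
  refine ⟨ν, hν, _, hRν, ?_⟩
  simpa only [mul_inv_cancel_left₀ (Nat.cast_ne_zero.2 hN.ne' : (N : ℂ) ≠ 0)] using hR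

theorem exists_isInfDiv_isRTransform_iff :
    (∃ μ : Dist k, IsInfDiv μ ∧ IsRTransform μ f) ↔ IsSchurmannSeries (wordCoeff f) := by
  constructor
  · rintro ⟨μ, hμ, hR⟩
    exact .of_hasOperatorModel_freeMoment fun N hN => hμ.hasOperatorModel_freeMoment hR hN
  · intro hf
    obtain ⟨μ, hμ, hR⟩ := hf.exists_isDc_isRTransform
    exact ⟨μ, ⟨hμ, fun N hN => hf.exists_isNFoldFree hR hN⟩, hR⟩

end InfiniteDivisibility

/-- Lemma 5.7 / Theorem 1.1°: `R^{inf-div}(k) = E_c(k)` : a series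
`f` is the `η`-series of some `μ ∈ D_c(k)` iff `f` is the `R`-transform of some
`⊞`-infinitely divisible distribution in `D_c(k)`. -/
theorem statement12 (k : ℕ) (hk : 0 < k) (f : NCSeries k) :
    (∃ μ : Dist k, IsDc μ ∧ IsEtaSeries μ f) ↔
    (∃ μ : Dist k, IsInfDiv μ ∧ IsRTransform μ f) :=
  exists_isDc_isEtaSeries_iff.trans exists_isInfDiv_isRTransform_iff.symm

end BBP
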